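/- Let ψ : ℕ → (0,∞) be a non-decreasing function and suppose liminf_{n→∞} (log ψ(n))/n = log B for some real 1 < B < ∞. Let E(ψ) = { x ∈ (0,1) irrational : for infinitely many n ∈ ℕ there exist indices 1 ≤ k ≠ l ≤ n with a_k(x) ≥ ψ(n) and a_l(x) ≥ ψ(n) }. Then dim_H E(ψ) = inf{ s ≥ 0 : limsup_{n→∞} (1/n)·log Σ_{(a_1,…,a_n) ∈ (ℕ≥1)^n} B^{−n(3s−1)}·q_n(a_1,…,a_n)^{−2s} ≤ 0 } (the limsup taken in the extended reals), i.e. the dimension equals inf{ s ≥ 0 : P(T, −(3s−1)·log B − s·log|T′|) ≤ 0 }. -/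

import Mathlib

open Filter MeasureTheory Set

/-- The Gauss map `T(x) = 1/x - ⌊1/x⌋`. -/
noncomputable def gaussMap (x : ℝ) : ℝ := 1 / x - (⌊1 / x⌋ : ℤ)

/-- The `n`-th partial quotient `a_n(x)` (for `n ≥ 1`) of the continued
fraction expansion of `x`: `a_n(x) = ⌊1 / T^{n-1}(x)⌋`. -/
noncomputable def pq (x : ℝ) (n : ℕ) : ℕ := ⌊1 / (gaussMap^[n - 1] x)⌋₊

/-- The continuant `q_n(a_1, …, a_n)`: `q_0 = 1`, `q_1 = a_1`,
`q_k = a_k q_{k-1} + q_{k-2}`. -/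
def contQ : (n : ℕ) → (Fin n → ℕ) → ℕ
  | 0, _ => 1
  | 1, a => a 0
  | (n + 2), a =>
      a (Fin.last (n + 1)) * contQ (n + 1) (Fin.init a) +
        contQ n (Fin.init (Fin.init a))

/-- `s_B`: the Wang–Wu pressure exponent. -/
noncomputable def sExp (B : ℝ) : ℝ :=
  sInf {s : ℝ | 0 ≤ s ∧
    Filter.atTop.limsup (fun n : ℕ =>
      (((n : ℝ)⁻¹ : ℝ) : EReal) * ENNReal.log (∑' a : Fin n → ℕ+,
        ENNReal.ofReal ((B ^ n * ((contQ n fun i => (a i : ℕ)) : ℝ) ^ 2) ^ (-s)))) ≤ 0}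

/-- `g_{B₁,B₂}`: the two-parameter pressure exponent. -/
noncomputable def gExp (B₁ B₂ : ℝ) : ℝ :=
  sInf {s : ℝ | 0 ≤ s ∧
    Filter.atTop.limsup (fun n : ℕ =>
      (((n : ℝ)⁻¹ : ℝ) : EReal) * ENNReal.log (∑' a : Fin n → ℕ+,
        ENNReal.ofReal (B₂ ^ ((1 - s) * (n : ℝ)) *
          (B₁ ^ n * ((contQ n fun i => (a i : ℕ)) : ℝ) ^ 2) ^ (-s)))) ≤ 0}

/-!
Write `S_n(s) = ∑ q_n(a_1, …, a_n) ^ (-2s)` and let `G(s)` be its exponential growth rate, so that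
the exponents in the infimum are those with `G(s) ≤ (3s - 1) log B`.

For the upper bound, `E(ψ)` is covered infinitely often by the cylinders with two digits at least
`b ^ n` among the first `n`, for any `b < B`. The points of a cylinder of continuant `q` followed by
a digit at least `H` form a set of diameter about `1 / (q ^ 2 H)`. Summing over the value `d ≥ H` of
the first large digit, which multiplies `q` by `d`, the cover costs about
`H ^ (1 - 2s) * H ^ (-s) = H ^ (-(3s-1))` times `S_n(s)`, up to a factor polynomial in `n`.

For the lower bound, concatenate independent random blocks of `N` digits, `N` being so large that
`S_N(s)` exceeds `b ^ (N (3s-1))` for some `b > B`. Most blocks follow the law of weights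
proportional to `q ^ (-2s)`, so that the mass of a cylinder is `q ^ (-2s)` times a weight that
shrinks geometrically. Once the weight is below `h ^ (-(3s-1))` for the size `h` of digits that
`ψ` asks for, a block starting with two independent digits uniform in `[h, 2h)` can be afforded; it
raises the weight to a constant. The random points then lie in `E(ψ)`, and their law satisfies the
mass distribution principle at the exponent `s`.
-/

/-! ### Convergents of finite words -/

/-- The matrix of the Möbius map `t ↦ 1 / (a₁ + 1 / (a₂ + ⋯ + 1 / (aₙ + t)))`. Its columns hold the
numerators and denominators of the last two convergents of `[a₁, …, aₙ]`. -/
def convMatrix (w : List ℕ+) : Matrix (Fin 2) (Fin 2) ℕ :=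
  (w.map fun a => !![0, 1; 1, (a : ℕ)]).prod

/-- The numerator `pₙ` of the convergent `[a₁, …, aₙ]`. -/
def convNum (w : List ℕ+) : ℕ := convMatrix w 0 1

/-- The denominator `qₙ` of the convergent `[a₁, …, aₙ]`. -/
def convDen (w : List ℕ+) : ℕ := convMatrix w 1 1

/-- The numerator `pₙ₋₁` of the last convergent but one of `[a₁, …, aₙ]`. -/
def prevNum (w : List ℕ+) : ℕ := convMatrix w 0 0

/-- The denominator `qₙ₋₁` of the last convergent but one of `[a₁, …, aₙ]`. -/
def prevDen (w : List ℕ+) : ℕ := convMatrix w 1 0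

@[simp] theorem convNum_nil : convNum [] = 0 := rfl
@[simp] theorem convDen_nil : convDen [] = 1 := rfl
@[simp] theorem prevNum_nil : prevNum [] = 1 := rfl
@[simp] theorem prevDen_nil : prevDen [] = 0 := rfl

theorem convMatrix_append (u v : List ℕ+) :
    convMatrix (u ++ v) = convMatrix u * convMatrix v := by
  simp [convMatrix]

theorem convDen_append (u v : List ℕ+) :
    convDen (u ++ v) = prevDen u * convNum v + convDen u * convDen v := by
  simp [convDen, prevDen, convNum, convMatrix_append, Matrix.mul_apply]

theorem prevDen_append (u v : List ℕ+) :
    prevDen (u ++ v) = prevDen u * prevNum v + convDen u * prevDen v := by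
  simp [convDen, prevDen, prevNum, convMatrix_append, Matrix.mul_apply]

@[simp] theorem convNum_cons (a : ℕ+) (w : List ℕ+) : convNum (a :: w) = convDen w := by
  simp [convNum, convDen, convMatrix, Matrix.mul_apply]

@[simp] theorem prevNum_cons (a : ℕ+) (w : List ℕ+) : prevNum (a :: w) = prevDen w := by
  simp [prevNum, prevDen, convMatrix, Matrix.mul_apply]

@[simp] theorem convDen_cons (a : ℕ+) (w : List ℕ+) :
    convDen (a :: w) = convNum w + a * convDen w := by
  simp [convNum, convDen, convMatrix, Matrix.mul_apply]

@[simp] theorem prevDen_cons (a : ℕ+) (w : List ℕ+) :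
    prevDen (a :: w) = prevNum w + a * prevDen w := by
  simp [prevNum, prevDen, convMatrix, Matrix.mul_apply]

theorem convDen_concat (u : List ℕ+) (a : ℕ+) :
    convDen (u ++ [a]) = a * convDen u + prevDen u := by
  rw [convDen_append, convDen_cons, convNum_cons, convDen_nil, convNum_nil]
  ring

theorem prevDen_concat (u : List ℕ+) (a : ℕ+) : prevDen (u ++ [a]) = convDen u := by
  simp [prevDen_append]

theorem contQ_eq_convDen : ∀ (n : ℕ) (a : Fin n → ℕ+),
    contQ n (fun i => (a i : ℕ)) = convDen (List.ofFn a)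
  | 0, a => by simp [contQ]
  | 1, a => by simp [contQ]
  | n + 2, a => by
    have h_init := contQ_eq_convDen (n + 1) (Fin.init a)
    have h_init_init := contQ_eq_convDen n (Fin.init (Fin.init a))
    have h_split : List.ofFn (Fin.init a) =
        List.ofFn (Fin.init (Fin.init a)) ++ [Fin.init a (Fin.last n)] := List.ofFn_succ_last
    rw [List.ofFn_succ_last]
    change _ = convDen (List.ofFn (Fin.init a) ++ _)
    rw [convDen_concat, ← h_init, h_split, prevDen_concat, ← h_init_init]
    rfl

theorem convDen_pos (w : List ℕ+) : 0 < convDen w := by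
  induction w with
  | nil => simp
  | cons a w ih => rw [convDen_cons]; have := a.pos; positivity

theorem one_le_convDen (w : List ℕ+) : (1 : ℝ) ≤ convDen w := by exact_mod_cast convDen_pos w

theorem convNum_le_convDen (w : List ℕ+) : convNum w ≤ convDen w := by
  cases w with
  | nil => simp
  | cons a w => simpa using (Nat.le_mul_of_pos_left _ a.pos).trans (Nat.le_add_left _ _)

theorem prevDen_le_convDen (w : List ℕ+) : prevDen w ≤ convDen w := by
  induction w using List.reverseRecOn with
  | nil => simp
  | append_singleton w a _ =>
    rw [convDen_concat, prevDen_concat]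
    exact (Nat.le_mul_of_pos_left _ a.pos).trans (Nat.le_add_right _ _)

theorem convDen_append_le (u v : List ℕ+) :
    convDen (u ++ v) ≤ 2 * (convDen u * convDen v) := by
  rw [convDen_append, two_mul]
  gcongr
  exacts [prevDen_le_convDen u, convNum_le_convDen v]

theorem convDen_mul_le_append (u v : List ℕ+) :
    convDen u * convDen v ≤ convDen (u ++ v) := by
  rw [convDen_append]; exact Nat.le_add_left _ _

theorem length_le_convDen (w : List ℕ+) : w.length ≤ convDen w := by
  induction w with
  | nil => simp
  | cons a w ih =>
    have ha : convDen w ≤ a * convDen w := Nat.le_mul_of_pos_left _ a.pos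
    cases w with
    | nil => simpa using ha
    | cons b w =>
      have := convDen_pos w
      rw [convDen_cons, convNum_cons]
      simp only [List.length_cons] at ih ⊢
      omega

theorem abs_det_convMatrix (w : List ℕ+) :
    |(prevNum w * convDen w - convNum w * prevDen w : ℝ)| = 1 := by
  induction w with
  | nil => simp
  | cons a w ih =>
    rw [← ih, ← abs_neg]
    congr 1
    simp only [prevNum_cons, convDen_cons, convNum_cons, prevDen_cons]
    push_cast; ring

/-! ### Inverse branches of the Gauss map -/

/-- The inverse branch `t ↦ 1 / (a₁ + 1 / (a₂ + ⋯ + 1 / (aₙ + t)))` of the `n`-th iterate of the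
Gauss map. -/
noncomputable def invBranch (w : List ℕ+) (t : ℝ) : ℝ :=
  w.foldr (fun (a : ℕ+) y => 1 / ((a : ℝ) + y)) t

theorem invBranch_cons (a : ℕ+) (w : List ℕ+) (t : ℝ) :
    invBranch (a :: w) t = 1 / ((a : ℝ) + invBranch w t) := rfl

theorem invBranch_append (u v : List ℕ+) (t : ℝ) :
    invBranch (u ++ v) t = invBranch u (invBranch v t) := by
  simp only [invBranch, List.foldr_append]

section InvBranch

variable (w : List ℕ+) {t t' : ℝ}

theorem convDen_le_prevDen_mul_add (ht : 0 ≤ t) :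
    (convDen w : ℝ) ≤ prevDen w * t + convDen w := by
  have : 0 ≤ (prevDen w : ℝ) * t := by positivity
  linarith

theorem prevDen_mul_add_convDen_pos (ht : 0 ≤ t) : 0 < (prevDen w : ℝ) * t + convDen w := by
  linarith [one_le_convDen w, convDen_le_prevDen_mul_add w ht]

theorem invBranch_eq_div (ht : 0 ≤ t) :
    invBranch w t = (prevNum w * t + convNum w) / (prevDen w * t + convDen w) := by
  induction w with
  | nil => simp [invBranch]
  | cons a w ih =>
    have h_den := prevDen_mul_add_convDen_pos w ht
    have h_head : (a : ℝ) + (prevNum w * t + convNum w) / (prevDen w * t + convDen w) =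
        ((prevNum w + a * prevDen w) * t + (convNum w + a * convDen w)) /
          (prevDen w * t + convDen w) := by
      rw [eq_div_iff h_den.ne', add_mul, div_mul_cancel₀ _ h_den.ne']; ring
    rw [invBranch_cons, ih, h_head, one_div_div]
    simp

theorem invBranch_mem_Icc (ht : t ∈ Icc (0 : ℝ) 1) : invBranch w t ∈ Icc (0 : ℝ) 1 := by
  induction w with
  | nil => exact ht
  | cons a w ih =>
    have ha : (1 : ℝ) ≤ a := Nat.one_le_cast.2 a.pos
    have := ih.1
    rw [invBranch_cons, one_div]
    exact ⟨by positivity, inv_le_one_of_one_le₀ (by linarith)⟩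

theorem abs_invBranch_sub (ht : 0 ≤ t) (ht' : 0 ≤ t') :
    |invBranch w t - invBranch w t'| =
      |t - t'| / ((prevDen w * t + convDen w) * (prevDen w * t' + convDen w)) := by
  have h := prevDen_mul_add_convDen_pos w ht
  have h' := prevDen_mul_add_convDen_pos w ht'
  rw [invBranch_eq_div w ht, invBranch_eq_div w ht', div_sub_div _ _ h.ne' h'.ne', abs_div,
    abs_of_pos (mul_pos h h'), ← one_mul |t - t'|, ← abs_det_convMatrix w, ← abs_mul]
  congr 2; ring

theorem abs_invBranch_sub_le (ht : 0 ≤ t) (ht' : 0 ≤ t') :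
    |invBranch w t - invBranch w t'| ≤ |t - t'| / (convDen w : ℝ) ^ 2 := by
  have := one_le_convDen w
  rw [abs_invBranch_sub w ht ht', sq]
  gcongr <;> exact convDen_le_prevDen_mul_add w ‹_›

end InvBranch

/-! ### Continued fraction digits of irrational points -/

theorem irrational_gaussMap {x : ℝ} (hx : Irrational x) : Irrational (gaussMap x) := by
  rw [gaussMap, one_div]; exact hx.inv.sub_intCast _

theorem gaussMap_mem_Ioo {x : ℝ} (hx : Irrational x) : gaussMap x ∈ Ioo (0 : ℝ) 1 :=
  ⟨(Int.fract_nonneg (1 / x)).lt_of_ne (irrational_gaussMap hx).ne_zero.symm,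
    Int.fract_lt_one (1 / x)⟩

theorem eq_one_div_floor_add_gaussMap {x : ℝ} (hx : 0 ≤ x) :
    x = 1 / ((⌊1 / x⌋₊ : ℝ) + gaussMap x) := by
  rw [gaussMap, natCast_floor_eq_intCast_floor (by positivity), add_sub_cancel, one_div_one_div]

theorem gaussMap_iterate_mem {x : ℝ} (hx : x ∈ Ioo (0 : ℝ) 1) (hi : Irrational x) (n : ℕ) :
    gaussMap^[n] x ∈ Ioo (0 : ℝ) 1 ∧ Irrational (gaussMap^[n] x) := by
  induction n with
  | zero => exact ⟨hx, hi⟩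
  | succ n ih =>
    rw [Function.iterate_succ_apply']
    exact ⟨gaussMap_mem_Ioo ih.2, irrational_gaussMap ih.2⟩

theorem pq_pos {x : ℝ} (hx : x ∈ Ioo (0 : ℝ) 1) (hi : Irrational x) (n : ℕ) : 0 < pq x n := by
  have h := (gaussMap_iterate_mem hx hi (n - 1)).1
  exact Nat.floor_pos.2 ((one_le_div h.1).2 h.2.le)

/-- The first `n` digits of a digit sequence. -/
def digitPrefix (a : ℕ → ℕ+) (n : ℕ) : List ℕ+ := List.ofFn fun i : Fin n => a i

@[simp] theorem length_digitPrefix (a : ℕ → ℕ+) (n : ℕ) : (digitPrefix a n).length = n :=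
  List.length_ofFn

theorem digitPrefix_add (a : ℕ → ℕ+) (m n : ℕ) :
    digitPrefix a (m + n) = digitPrefix a m ++ digitPrefix (fun i => a (m + i)) n := by
  simp [digitPrefix, List.ofFn_add]

theorem digitPrefix_succ (a : ℕ → ℕ+) (n : ℕ) :
    digitPrefix a (n + 1) = digitPrefix a n ++ [a n] := by
  rw [digitPrefix_add]; simp [digitPrefix]

theorem digitPrefix_succ_cons (a : ℕ → ℕ+) (n : ℕ) :
    digitPrefix a (n + 1) = a 0 :: digitPrefix (fun i => a (i + 1)) n := by
  simp [digitPrefix, List.ofFn_succ]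

theorem digitPrefix_congr {a b : ℕ → ℕ+} {n : ℕ} (h : ∀ i < n, a i = b i) :
    digitPrefix a n = digitPrefix b n :=
  congrArg List.ofFn (funext fun i => h i i.2)

theorem le_convDen_digitPrefix (a : ℕ → ℕ+) (n : ℕ) : (n : ℝ) ≤ convDen (digitPrefix a n) := by
  exact_mod_cast length_digitPrefix a n ▸ length_le_convDen (digitPrefix a n)

/-- The digit sequence of a point, indexed from `0`: the `i`-th entry is the partial quotient
`a_{i+1}(x)`. -/
noncomputable def digitSeq (x : ℝ) (i : ℕ) : ℕ+ := (pq x (i + 1)).toPNat'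

theorem coe_digitSeq {x : ℝ} (hx : x ∈ Ioo (0 : ℝ) 1) (hi : Irrational x) (i : ℕ) :
    (digitSeq x i : ℕ) = pq x (i + 1) := by
  simp [digitSeq, pq_pos hx hi]

theorem eq_invBranch_digitPrefix {x : ℝ} (hx : x ∈ Ioo (0 : ℝ) 1) (hi : Irrational x) (n : ℕ) :
    x = invBranch (digitPrefix (digitSeq x) n) (gaussMap^[n] x) := by
  induction n with
  | zero => rfl
  | succ n ih =>
    have h := eq_one_div_floor_add_gaussMap (gaussMap_iterate_mem hx hi n).1.1.le
    have h_digit : (digitSeq x n : ℝ) = ⌊1 / gaussMap^[n] x⌋₊ := by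
      exact_mod_cast coe_digitSeq hx hi n
    rw [digitPrefix_succ, invBranch_append, invBranch_cons, h_digit,
      Function.iterate_succ_apply']
    exact ih.trans (congrArg _ h)

/-! ### Infinite continued fractions -/

/-- The value of the infinite continued fraction with digit sequence `a`. -/
noncomputable def contFrac (a : ℕ → ℕ+) : ℝ :=
  limUnder atTop fun n => invBranch (digitPrefix a n) 0

theorem invBranch_digitPrefix_add_zero (a : ℕ → ℕ+) (m n : ℕ) :
    ∃ t ∈ Icc (0 : ℝ) 1, invBranch (digitPrefix a (m + n)) 0 = invBranch (digitPrefix a m) t :=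
  ⟨_, invBranch_mem_Icc (digitPrefix (fun i => a (m + i)) n) ⟨le_rfl, zero_le_one⟩, by
    rw [digitPrefix_add, invBranch_append]⟩

theorem tendsto_invBranch_contFrac (a : ℕ → ℕ+) :
    Tendsto (fun n => invBranch (digitPrefix a n) 0) atTop (nhds (contFrac a)) := by
  have h_lim : Tendsto (fun m : ℕ => 2 * (1 / ((m : ℝ) + 1))) atTop (nhds 0) := by
    simpa using tendsto_one_div_add_atTop_nhds_zero_nat.const_mul (2 : ℝ)
  refine (cauchySeq_of_le_tendsto_0' _ (fun m n hmn => ?_) h_lim).tendsto_limUnder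
  obtain ⟨k, rfl⟩ := Nat.exists_eq_add_of_le hmn
  obtain ⟨t, ht, h_eq⟩ := invBranch_digitPrefix_add_zero a m k
  have h_den := le_convDen_digitPrefix a m
  have h_one := one_le_convDen (digitPrefix a m)
  rw [Real.dist_eq, h_eq]
  calc |invBranch (digitPrefix a m) 0 - invBranch (digitPrefix a m) t|
      ≤ |0 - t| / (convDen (digitPrefix a m) : ℝ) ^ 2 := abs_invBranch_sub_le _ le_rfl ht.1
    _ ≤ 1 / (convDen (digitPrefix a m) : ℝ) ^ 2 := by
        gcongr
        rw [zero_sub, abs_neg, abs_of_nonneg ht.1]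
        exact ht.2
    _ ≤ 2 * (1 / ((m : ℝ) + 1)) := by
        rw [mul_one_div, div_le_div_iff₀ (by positivity) (by positivity)]
        nlinarith

theorem contFrac_nonneg (a : ℕ → ℕ+) : 0 ≤ contFrac a :=
  ge_of_tendsto' (tendsto_invBranch_contFrac a) fun _ =>
    (invBranch_mem_Icc _ ⟨le_rfl, zero_le_one⟩).1

theorem contFrac_eq_one_div (a : ℕ → ℕ+) :
    contFrac a = 1 / ((a 0 : ℝ) + contFrac fun i => a (i + 1)) := by
  have h_pos : (0 : ℝ) < a 0 + contFrac fun i => a (i + 1) :=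
    add_pos_of_pos_of_nonneg (Nat.cast_pos.2 (a 0).pos) (contFrac_nonneg _)
  have h_shift : Tendsto (fun n => invBranch (digitPrefix a (n + 1)) 0) atTop
      (nhds (1 / (a 0 + contFrac fun i => a (i + 1)))) := by
    simp only [digitPrefix_succ_cons, invBranch_cons]
    exact tendsto_const_nhds.div ((tendsto_invBranch_contFrac _).const_add _) h_pos.ne'
  exact tendsto_nhds_unique ((tendsto_add_atTop_iff_nat 1).2 (tendsto_invBranch_contFrac a)) h_shift

theorem one_div_contFrac (a : ℕ → ℕ+) :
    1 / contFrac a = a 0 + contFrac fun i => a (i + 1) := by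
  rw [contFrac_eq_one_div a, one_div_one_div]

theorem contFrac_pos (a : ℕ → ℕ+) : 0 < contFrac a := by
  have := contFrac_nonneg fun i => a (i + 1)
  have : (0 : ℝ) < a 0 := Nat.cast_pos.2 (a 0).pos
  rw [contFrac_eq_one_div]; positivity

theorem contFrac_lt_one (a : ℕ → ℕ+) : contFrac a < 1 := by
  have h_pos := contFrac_pos fun i => a (i + 1)
  have h_one : (1 : ℝ) ≤ a 0 := Nat.one_le_cast.2 (a 0).pos
  rw [contFrac_eq_one_div, div_lt_one] <;> linarith

theorem contFrac_mem_Ioo (a : ℕ → ℕ+) : contFrac a ∈ Ioo (0 : ℝ) 1 :=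
  ⟨contFrac_pos a, contFrac_lt_one a⟩

theorem contFrac_eq_invBranch (a : ℕ → ℕ+) (n : ℕ) :
    contFrac a = invBranch (digitPrefix a n) (contFrac fun i => a (n + i)) := by
  induction n with
  | zero => simp [digitPrefix, invBranch]
  | succ n ih =>
    rw [digitPrefix_succ, invBranch_append, invBranch_cons, ih,
      contFrac_eq_one_div fun i => a (n + i)]
    simp only [add_zero, add_assoc, add_comm 1, invBranch, List.foldr_nil]

theorem floor_one_div_contFrac (a : ℕ → ℕ+) : ⌊1 / contFrac a⌋₊ = a 0 := by
  have h := contFrac_mem_Ioo fun i => a (i + 1)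
  rw [one_div_contFrac, add_comm, Nat.floor_add_natCast h.1.le, Nat.floor_eq_zero.2 h.2, zero_add]

theorem gaussMap_contFrac (a : ℕ → ℕ+) :
    gaussMap (contFrac a) = contFrac fun i => a (i + 1) := by
  have h := eq_one_div_floor_add_gaussMap (contFrac_pos a).le
  rw [floor_one_div_contFrac] at h
  have h' := congrArg (1 / ·) h
  rw [one_div_contFrac, one_div_one_div] at h'
  exact (add_left_cancel h').symm

theorem gaussMap_iterate_contFrac (a : ℕ → ℕ+) (n : ℕ) :
    gaussMap^[n] (contFrac a) = contFrac fun i => a (n + i) := by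
  induction n with
  | zero => simp
  | succ n ih =>
    rw [Function.iterate_succ_apply', ih, gaussMap_contFrac]
    simp only [add_assoc, add_comm 1]

theorem pq_contFrac (a : ℕ → ℕ+) (n : ℕ) : pq (contFrac a) (n + 1) = a n := by
  rw [pq, Nat.add_sub_cancel, gaussMap_iterate_contFrac, floor_one_div_contFrac, add_zero]

-- A rational `p / d` is at distance at least `1 / (d q)` from any other fraction of denominator
-- `q`, but convergents of denominator `q > d` are closer.
theorem irrational_contFrac (a : ℕ → ℕ+) : Irrational (contFrac a) := by
  rintro ⟨r, hr⟩
  set w := digitPrefix a (r.den + 1)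
  set t := contFrac fun i => a (r.den + 1 + i)
  have ht : t ∈ Ioo (0 : ℝ) 1 := contFrac_mem_Ioo _
  have hd : (0 : ℝ) < r.den := Nat.cast_pos.2 r.den_pos
  have hq : (r.den : ℝ) < convDen w := by
    exact_mod_cast le_convDen_digitPrefix a (r.den + 1)
  have hq0 : (0 : ℝ) < convDen w := hd.trans hq
  have h_dist : |(r.num / r.den - convNum w / convDen w : ℝ)| =
      t / ((prevDen w * t + convDen w) * convDen w) := by
    rw [← Rat.cast_def, hr, contFrac_eq_invBranch a (r.den + 1)]
    simpa [invBranch_eq_div, abs_of_pos ht.1] using abs_invBranch_sub w ht.1.le le_rfl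
  have h_int : ((|r.num * convDen w - r.den * convNum w| : ℤ) : ℝ) =
      r.den * t / (prevDen w * t + convDen w) := by
    have h_split : (r.num * convDen w - r.den * convNum w : ℝ) =
        (r.num / r.den - convNum w / convDen w) * (r.den * convDen w) := by field_simp
    push_cast
    rw [h_split, abs_mul, h_dist, abs_of_pos (mul_pos hd hq0), ← div_div]
    field_simp
  have h_den : (convDen w : ℝ) ≤ prevDen w * t + convDen w :=
    convDen_le_prevDen_mul_add w ht.1.le
  have h_pos : (0 : ℤ) < |r.num * convDen w - r.den * convNum w| := by
    rw [← Int.cast_pos (R := ℝ), h_int]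
    exact div_pos (mul_pos hd ht.1) (hq0.trans_le h_den)
  have h_lt : |r.num * convDen w - r.den * convNum w| < (1 : ℤ) := by
    rw [← Int.cast_lt (R := ℝ), h_int, Int.cast_one, div_lt_one (hq0.trans_le h_den)]
    nlinarith [ht.2]
  omega

section Separation

variable (a b : ℕ → ℕ+)

theorem one_div_le_contFrac {M : ℕ+} (h : a 0 ≤ M) : 1 / ((M : ℝ) + 1) ≤ contFrac a := by
  have h' : (a 0 : ℝ) ≤ M := by exact_mod_cast h
  have := contFrac_mem_Ioo fun i => a (i + 1)
  rw [contFrac_eq_one_div]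
  exact one_div_le_one_div_of_le (by linarith [this.1, (a 0 : ℕ).cast_nonneg (α := ℝ)])
    (by linarith [this.2])

theorem contFrac_le_half (h : 2 ≤ a 0) : contFrac a ≤ 1 / 2 := by
  have h' : (2 : ℝ) ≤ a 0 := by exact_mod_cast h
  rw [contFrac_eq_one_div]
  exact one_div_le_one_div_of_le two_pos (by linarith [contFrac_pos fun i => a (i + 1)])

variable {a b}

theorem contFrac_le_contFrac_add_one_sub {M : ℕ+} (h : a 0 ≤ M ∨ 2 ≤ b 0) :
    contFrac b ≤ contFrac a + (1 - 1 / ((M : ℝ) + 1)) := by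
  rcases h with h | h
  · linarith [one_div_le_contFrac a h, contFrac_lt_one b]
  · have hM : (1 : ℝ) ≤ M := Nat.one_le_cast.2 M.pos
    have : 1 / ((M : ℝ) + 1) ≤ 1 / 2 := one_div_le_one_div_of_le two_pos (by linarith)
    linarith [contFrac_le_half b h, contFrac_pos a]

theorem abs_digit_sub_le {M : ℕ+} (h : (a 1 ≤ M ∧ b 1 ≤ M) ∨ (2 ≤ a 1 ∧ 2 ≤ b 1)) :
    |(a 0 - b 0 : ℝ)| ≤ (M + 1) * |1 / contFrac a - 1 / contFrac b| := by
  wlog hlt : b 0 < a 0 generalizing a b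
  · rcases (not_lt.1 hlt).lt_or_eq with hlt | heq
    · rw [abs_sub_comm, abs_sub_comm (1 / _)]
      exact this (h.imp And.symm And.symm) hlt
    · rw [heq, sub_self, abs_zero]; positivity
  have hlt' : (b 0 : ℝ) + 1 ≤ a 0 := by exact_mod_cast hlt
  have h_tail := contFrac_le_contFrac_add_one_sub (a := fun i => a (i + 1))
    (b := fun i => b (i + 1)) (M := M) (h.imp And.left And.right)
  have hM : (0 : ℝ) < M + 1 := by positivity
  have hM1 : 1 / ((M : ℝ) + 1) ≤ 1 := (div_le_one hM).2 (by linarith [(M : ℕ).cast_nonneg (α := ℝ)])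
  have h_sub : (a 0 - b 0 : ℝ) / (M + 1) ≤ 1 / contFrac a - 1 / contFrac b := by
    rw [one_div_contFrac, one_div_contFrac, div_eq_mul_one_div]
    nlinarith
  rw [abs_of_nonneg (by linarith : (0 : ℝ) ≤ a 0 - b 0), ← div_le_iff₀' hM]
  exact h_sub.trans (le_abs_self _)

theorem prevDen_mul_contFrac_add_le (w : List ℕ+) (a : ℕ → ℕ+) :
    prevDen w * contFrac a + convDen w ≤ (a 0 + 2) * contFrac a * convDen w := by
  have h_prev : (prevDen w : ℝ) ≤ convDen w := by exact_mod_cast prevDen_le_convDen w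
  have h_pos := contFrac_pos a
  have h_one : 1 ≤ (a 0 + 1) * contFrac a := by
    rw [← div_le_iff₀ h_pos, one_div_contFrac]
    linarith [contFrac_lt_one fun i => a (i + 1)]
  calc prevDen w * contFrac a + convDen w
      ≤ convDen w * contFrac a + ((a 0 + 1) * contFrac a) * convDen w := by
        gcongr
        exact le_mul_of_one_le_left (by positivity) h_one
    _ = (a 0 + 2) * contFrac a * convDen w := by ring

theorem abs_digit_sub_le_mul_abs_contFrac_sub {M : ℕ+} {n : ℕ} (hab : ∀ i < n, a i = b i)
    (h : (a (n + 1) ≤ M ∧ b (n + 1) ≤ M) ∨ (2 ≤ a (n + 1) ∧ 2 ≤ b (n + 1))) :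
    |(a n - b n : ℝ)| ≤ (M + 1) * ((a n + 2) * (b n + 2)) * (convDen (digitPrefix a n) : ℝ) ^ 2 *
      |contFrac a - contFrac b| := by
  set w := digitPrefix a n
  set x := contFrac fun i => a (n + i)
  set y := contFrac fun i => b (n + i)
  have hx : 0 < x := contFrac_pos _
  have hy : 0 < y := contFrac_pos _
  set Dx : ℝ := prevDen w * x + convDen w
  set Dy : ℝ := prevDen w * y + convDen w
  have hDx : 0 < Dx := prevDen_mul_add_convDen_pos w hx.le
  have hDy : 0 < Dy := prevDen_mul_add_convDen_pos w hy.le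
  have h_dist : |x - y| = Dx * Dy * |contFrac a - contFrac b| := by
    rw [contFrac_eq_invBranch a n, contFrac_eq_invBranch b n, ← digitPrefix_congr hab,
      abs_invBranch_sub w hx.le hy.le, mul_div_cancel₀ _ (by positivity)]
  have h_head : |(a n - b n : ℝ)| ≤ (M + 1) * |1 / x - 1 / y| :=
    abs_digit_sub_le (a := fun i => a (n + i)) (b := fun i => b (n + i)) h
  have h_inv : |1 / x - 1 / y| = |x - y| / (x * y) := by
    rw [div_sub_div _ _ hx.ne' hy.ne', abs_div, abs_of_pos (mul_pos hx hy), abs_sub_comm]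
    simp only [one_mul, mul_one]
  have hDx_le : Dx ≤ (a n + 2) * x * convDen w :=
    prevDen_mul_contFrac_add_le w fun i => a (n + i)
  have hDy_le : Dy ≤ (b n + 2) * y * convDen w :=
    prevDen_mul_contFrac_add_le w fun i => b (n + i)
  calc |(a n - b n : ℝ)| ≤ (M + 1) * (Dx * Dy * |contFrac a - contFrac b| / (x * y)) := by
        rw [← h_dist, ← h_inv]; exact h_head
    _ ≤ (M + 1) * ((a n + 2) * x * convDen w * ((b n + 2) * y * convDen w) *
          |contFrac a - contFrac b| / (x * y)) := by gcongr
    _ = _ := by field_simp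

end Separation

/-! ### The growth of the sums `∑ qₙ^{-2s}` -/

/-- The partition sum `∑ qₙ(a₁, …, aₙ)^{-2s}` over all words of length `n`. -/
noncomputable def denSum (n : ℕ) (s : ℝ) : ENNReal :=
  ∑' a : Fin n → ℕ+, ENNReal.ofReal ((convDen (List.ofFn a) : ℝ) ^ (-(2 * s)))

/-- The exponential growth rate of `denSum n s`, that is, the pressure of `-s log |T'|` under the
Gauss map. -/
noncomputable def denGrowth (s : ℝ) : EReal := ExpGrowth.expGrowthSup fun n => denSum n s

/-- The exponents `s ≥ 0` at which the pressure of `-(3s-1) log B - s log |T'|` is non-positive. -/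
def subcriticalExponents (B : ℝ) : Set ℝ :=
  {s | 0 ≤ s ∧ denGrowth s ≤ (((3 * s - 1) * Real.log B : ℝ) : EReal)}

theorem denSum_anti (n : ℕ) : Antitone (denSum n) := fun _ _ h =>
  ENNReal.tsum_le_tsum fun _ => ENNReal.ofReal_le_ofReal <|
    Real.rpow_le_rpow_of_exponent_le (one_le_convDen _) (by linarith)

theorem denSum_mul_le (m n : ℕ) {s : ℝ} (hs : 0 ≤ s) :
    denSum m s * denSum n s ≤ ENNReal.ofReal (2 ^ (2 * s)) * denSum (m + n) s := by
  rw [denSum, ← ENNReal.tsum_mul_right]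
  simp only [denSum, ← ENNReal.tsum_mul_left]
  rw [← ENNReal.tsum_prod, ← (Fin.appendEquiv m n).tsum_eq]
  refine ENNReal.tsum_le_tsum fun p => ?_
  obtain ⟨u, v⟩ := p
  have hu := one_le_convDen (List.ofFn u)
  have hv := one_le_convDen (List.ofFn v)
  have huv := one_le_convDen (List.ofFn u ++ List.ofFn v)
  have h_den : (convDen (List.ofFn u ++ List.ofFn v) : ℝ) ≤
      2 * (convDen (List.ofFn u) * convDen (List.ofFn v)) := by
    exact_mod_cast convDen_append_le _ _
  have h_rpow := Real.rpow_le_rpow_of_nonpos (by linarith) h_den (by linarith : -(2 * s) ≤ 0)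
  rw [Real.mul_rpow zero_le_two (by positivity), Real.mul_rpow (by positivity) (by positivity),
    Real.rpow_neg zero_le_two, inv_mul_le_iff₀ (by positivity)] at h_rpow
  rw [← ENNReal.ofReal_mul (by positivity), ← ENNReal.ofReal_mul (by positivity)]
  refine ENNReal.ofReal_le_ofReal (h_rpow.trans_eq ?_)
  rw [← List.ofFn_fin_append]
  rfl

theorem denSum_one (s : ℝ) :
    denSum 1 s = ∑' d : ℕ+, ENNReal.ofReal ((d : ℝ) ^ (-(2 * s))) := by
  rw [denSum, ← (Equiv.funUnique (Fin 1) ℕ+).symm.tsum_eq]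
  simp

theorem denSum_one_half : denSum 1 (1 / 2) = ⊤ := by
  rw [denSum_one]
  by_contra h
  have h_summable : Summable fun d : ℕ+ => 1 / ((d : ℕ) : ℝ) := by
    refine (ENNReal.summable_toReal h).congr fun d => ?_
    rw [ENNReal.toReal_ofReal (by positivity)]
    simp [Real.rpow_neg_one]
  exact Real.not_summable_one_div_natCast
    (summable_pnat_iff_summable_nat (f := fun n : ℕ => 1 / (n : ℝ)).1 h_summable)

theorem denSum_ne_zero (n : ℕ) (s : ℝ) : denSum n s ≠ 0 := by
  refine (ENNReal.tsum_eq_zero.not.2 fun h => ?_)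
  have h_pos := one_le_convDen (List.ofFn fun _ : Fin n => (1 : ℕ+))
  have := ENNReal.ofReal_eq_zero.1 (h fun _ => 1)
  exact this.not_gt (by positivity)

theorem denSum_eq_top {n : ℕ} (hn : n ≠ 0) {s : ℝ} (hs : s ≤ 1 / 2) : denSum n s = ⊤ := by
  obtain ⟨k, rfl⟩ := Nat.exists_eq_add_of_le (Nat.one_le_iff_ne_zero.2 hn)
  have h := denSum_mul_le 1 k (s := 1 / 2) (by norm_num)
  rw [denSum_one_half, ENNReal.top_mul (denSum_ne_zero _ _), top_le_iff] at h
  have h_half : denSum (1 + k) (1 / 2) = ⊤ := by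
    by_contra h_ne
    exact ENNReal.mul_ne_top ENNReal.ofReal_ne_top h_ne h
  exact top_le_iff.1 (h_half ▸ denSum_anti _ hs)

theorem tsum_ofReal_sub_succ_le {f : ℕ → ℝ} (hf : Antitone f) (hf0 : ∀ n, 0 ≤ f n) :
    ∑' n, ENNReal.ofReal (f n - f (n + 1)) ≤ ENNReal.ofReal (f 0) := by
  refine ENNReal.tsum_le_of_sum_range_le fun n => ?_
  rw [← ENNReal.ofReal_sum_of_nonneg fun i _ => sub_nonneg.2 (hf i.le_succ),
    Finset.sum_range_sub']
  exact ENNReal.ofReal_le_ofReal (sub_le_self _ (hf0 n))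

theorem tsum_one_div_linear_mul_le {q q' : ℝ} (hq : 0 < q) (hq' : 0 ≤ q') :
    ∑' d : ℕ+, ENNReal.ofReal (1 / ((d * q + q') * (d * q + q' + q))) ≤
      ENNReal.ofReal (1 / (q * (q + q'))) := by
  set f : ℕ → ℝ := fun k => 1 / (q * ((k + 1) * q + q')) with hf
  have h_anti : Antitone f := antitone_nat_of_succ_le fun k => by
    simp only [hf, Nat.cast_succ]
    gcongr
    linarith
  have h_tele : ∀ k : ℕ, 1 / ((((k + 1 : ℕ) : ℝ) * q + q') * (((k + 1 : ℕ) : ℝ) * q + q' + q)) =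
      f k - f (k + 1) := fun k => by
    simp only [hf, Nat.cast_succ]
    field_simp
    ring
  rw [tsum_pnat_eq_tsum_succ (f := fun d : ℕ =>
    ENNReal.ofReal (1 / ((d * q + q') * (d * q + q' + q))))]
  simp only [h_tele]
  refine (tsum_ofReal_sub_succ_le h_anti fun k => by positivity).trans_eq ?_
  simp [hf]

/-- The cylinder of a word `w` has length `1 / (qₙ(w) (qₙ(w) + qₙ₋₁(w)))`, and the cylinders of a
given order have disjoint interiors in `[0, 1]`. -/
theorem tsum_cylinder_length_le_one (n : ℕ) :
    ∑' a : Fin n → ℕ+, ENNReal.ofReal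
      (1 / (convDen (List.ofFn a) * (convDen (List.ofFn a) + prevDen (List.ofFn a)))) ≤ 1 := by
  induction n with
  | zero => simp [tsum_fintype]
  | succ n ih =>
    refine le_trans ?_ ih
    rw [← (Fin.snocEquiv fun _ => ℕ+).tsum_eq, ENNReal.tsum_prod', ENNReal.tsum_comm]
    refine ENNReal.tsum_le_tsum fun u => ?_
    refine le_trans (le_of_eq (tsum_congr fun d => ?_)) <|
      tsum_one_div_linear_mul_le (Nat.cast_pos.2 (convDen_pos (List.ofFn u))) (Nat.cast_nonneg _)
    have h_word : List.ofFn (Fin.snocEquiv (fun _ => ℕ+) (d, u)) = List.ofFn u ++ [d] := by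
      rw [List.ofFn_succ_last]; simp [Fin.snocEquiv]
    rw [h_word, convDen_concat, prevDen_concat]
    push_cast
    rfl

theorem denSum_at_one_le (n : ℕ) : denSum n 1 ≤ 2 := by
  calc denSum n 1 ≤ 2 * ∑' a : Fin n → ℕ+, ENNReal.ofReal
        (1 / (convDen (List.ofFn a) * (convDen (List.ofFn a) + prevDen (List.ofFn a)))) := by
        rw [denSum, ← ENNReal.tsum_mul_left]
        refine ENNReal.tsum_le_tsum fun a => ?_
        have h_one := one_le_convDen (List.ofFn a)
        have h_prev : (prevDen (List.ofFn a) : ℝ) ≤ convDen (List.ofFn a) := by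
          exact_mod_cast prevDen_le_convDen _
        rw [← ENNReal.ofReal_ofNat, ← ENNReal.ofReal_mul zero_le_two]
        refine ENNReal.ofReal_le_ofReal ?_
        rw [mul_one, Real.rpow_neg (by positivity), Real.rpow_two, mul_one_div,
          inv_eq_one_div, div_le_div_iff₀ (by positivity) (by positivity)]
        nlinarith
    _ ≤ 2 * 1 := by gcongr; exact tsum_cylinder_length_le_one n
    _ = 2 := mul_one 2

theorem expGrowthSup_pow_mul {b : ENNReal} (hb0 : b ≠ 0) (hb : b ≠ ⊤) (u : ℕ → ENNReal) :
    ExpGrowth.expGrowthSup (fun n => b ^ n * u n) = ENNReal.log b + ExpGrowth.expGrowthSup u := by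
  refine le_antisymm ?_ ?_
  · rw [← ExpGrowth.expGrowthSup_pow]
    refine ExpGrowth.expGrowthSup_mul_le (Or.inl ?_) (Or.inl ?_) <;>
      simpa [ExpGrowth.expGrowthSup_pow]
  · rw [← ExpGrowth.expGrowthInf_pow]
    exact ExpGrowth.le_expGrowthSup_mul'

theorem pressure_sum_eq {B : ℝ} (hB : 0 ≤ B) (n : ℕ) (s : ℝ) :
    ∑' a : Fin n → ℕ+, ENNReal.ofReal (B ^ (-(n : ℝ) * (3 * s - 1)) *
      ((contQ n fun i => (a i : ℕ)) : ℝ) ^ (-(2 * s))) =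
      ENNReal.ofReal (B ^ (-(3 * s - 1))) ^ n * denSum n s := by
  rw [denSum, ← ENNReal.tsum_mul_left]
  refine tsum_congr fun a => ?_
  rw [contQ_eq_convDen, ENNReal.ofReal_mul (by positivity), ← ENNReal.ofReal_pow (by positivity),
    ← Real.rpow_natCast, ← Real.rpow_mul hB]
  ring_nf

theorem limsup_pressure_sum {B : ℝ} (hB : 0 < B) (s : ℝ) :
    atTop.limsup (fun n : ℕ => (((n : ℝ)⁻¹ : ℝ) : EReal) *
      ENNReal.log (∑' a : Fin n → ℕ+, ENNReal.ofReal (B ^ (-(n : ℝ) * (3 * s - 1)) *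
        ((contQ n fun i => (a i : ℕ)) : ℝ) ^ (-(2 * s))))) =
      denGrowth s - (((3 * s - 1) * Real.log B : ℝ) : EReal) := by
  have hβ : 0 < B ^ (-(3 * s - 1)) := Real.rpow_pos_of_pos hB _
  have h_log : ENNReal.log (ENNReal.ofReal (B ^ (-(3 * s - 1)))) =
      -(((3 * s - 1) * Real.log B : ℝ) : EReal) := by
    rw [ENNReal.log_ofReal_of_pos hβ, Real.log_rpow hB, neg_mul, EReal.coe_neg]
  have h_growth := expGrowthSup_pow_mul (ENNReal.ofReal_pos.2 hβ).ne' ENNReal.ofReal_ne_top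
    fun n => denSum n s
  rw [h_log, add_comm, ← sub_eq_add_neg] at h_growth
  refine (limsup_congr (Eventually.of_forall fun n => ?_)).trans h_growth
  simp only [pressure_sum_eq hB.le, EReal.div_eq_inv_mul, EReal.coe_inv, EReal.coe_natCast]

theorem subcriticalExponents_eq {B : ℝ} (hB : 0 < B) :
    subcriticalExponents B = {s | 0 ≤ s ∧ atTop.limsup (fun n : ℕ => (((n : ℝ)⁻¹ : ℝ) : EReal) *
      ENNReal.log (∑' a : Fin n → ℕ+, ENNReal.ofReal (B ^ (-(n : ℝ) * (3 * s - 1)) *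
        ((contQ n fun i => (a i : ℕ)) : ℝ) ^ (-(2 * s))))) ≤ 0} := by
  ext s
  rw [mem_ofPred_eq, limsup_pressure_sum hB, EReal.sub_nonpos]
  rfl

section Growth

variable {B s r : ℝ}

theorem exp_log_mul_natCast {τ : ℝ} (hτ : 0 < τ) (n : ℕ) :
    EReal.exp (((Real.log τ : ℝ) : EReal) * n) = ENNReal.ofReal (τ ^ n) := by
  rw [← EReal.coe_natCast, ← EReal.coe_mul, EReal.exp_coe, mul_comm, Real.exp_nat_mul,
    Real.exp_log hτ]

theorem eventually_denSum_le_pow (hB : 0 < B) (h : denGrowth s ≤ ((r * Real.log B : ℝ) : EReal))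
    {τ : ℝ} (hτ : B ^ r < τ) : ∀ᶠ n : ℕ in atTop, denSum n s ≤ ENNReal.ofReal (τ ^ n) := by
  have hτ0 : 0 < τ := (Real.rpow_pos_of_pos hB r).trans hτ
  have h_log : r * Real.log B < Real.log τ := by
    rw [← Real.log_rpow hB]; exact Real.log_lt_log (by positivity) hτ
  simp only [← exp_log_mul_natCast hτ0]
  exact ExpGrowth.eventually_le_exp (h.trans_lt (EReal.coe_lt_coe h_log))

theorem exists_frequently_pow_le_denSum (hB : 0 < B)
    (h : ((r * Real.log B : ℝ) : EReal) < denGrowth s) :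
    ∃ τ > B ^ r, ∃ᶠ n : ℕ in atTop, ENNReal.ofReal (τ ^ n) ≤ denSum n s := by
  obtain ⟨c, hc, hc'⟩ := EReal.lt_iff_exists_real_btwn.1 h
  refine ⟨Real.exp c, ?_, ?_⟩
  · rw [Real.rpow_def_of_pos hB, mul_comm]
    exact Real.exp_lt_exp.2 (EReal.coe_lt_coe_iff.1 hc)
  · simp only [← exp_log_mul_natCast (Real.exp_pos c), Real.log_exp]
    exact ExpGrowth.frequently_exp_le hc'

theorem exists_frequently_mul_rpow_lt_denSum (hB : 0 < B) (hr : 0 < r)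
    (h : ((r * Real.log B : ℝ) : EReal) < denGrowth s) :
    ∃ b > B, ∀ c : ℝ, ∃ᶠ n : ℕ in atTop, ENNReal.ofReal (c * (b ^ n) ^ r) < denSum n s := by
  obtain ⟨τ, hτ, h_freq⟩ := exists_frequently_pow_le_denSum hB h
  obtain ⟨σ, hσ, hστ⟩ := exists_between hτ
  have hσ0 : 0 < σ := (Real.rpow_pos_of_pos hB r).trans hσ
  refine ⟨σ ^ r⁻¹, (Real.lt_rpow_inv_iff_of_pos hB.le hσ0.le hr).2 hσ, fun c => ?_⟩
  have h_ratio := (tendsto_pow_atTop_atTop_of_one_lt ((one_lt_div hσ0).2 hστ)).eventually_gt_atTop c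
  refine (h_freq.and_eventually h_ratio).mono fun n ⟨hn, hcn⟩ => lt_of_lt_of_le ?_ hn
  rw [div_pow, lt_div_iff₀ (by positivity)] at hcn
  rw [← Real.rpow_pow_comm (by positivity), Real.rpow_inv_rpow hσ0.le hr.ne']
  exact (ENNReal.ofReal_lt_ofReal_iff (pow_pos (hσ0.trans hστ) n)).2 hcn

theorem denGrowth_eq_top (hs : s ≤ 1 / 2) : denGrowth s = ⊤ := by
  rw [denGrowth, ← ExpGrowth.expGrowthSup_top]
  refine ExpGrowth.expGrowthSup_congr ?_
  filter_upwards [eventually_ne_atTop 0] with n hn using denSum_eq_top hn hs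

theorem half_lt_of_mem_subcriticalExponents (hs : s ∈ subcriticalExponents B) : 1 / 2 < s := by
  by_contra! h
  have := hs.2
  rw [denGrowth_eq_top h, top_le_iff] at this
  exact EReal.coe_ne_top _ this

theorem denGrowth_one_nonpos : denGrowth 1 ≤ 0 :=
  (ExpGrowth.expGrowthSup_monotone denSum_at_one_le).trans_eq
    (ExpGrowth.expGrowthSup_const (b := 2) (by simp) (by simp))

theorem one_mem_subcriticalExponents (hB : 1 ≤ B) : (1 : ℝ) ∈ subcriticalExponents B :=
  ⟨zero_le_one, denGrowth_one_nonpos.trans <| EReal.coe_nonneg.2 <| by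
    have := Real.log_nonneg hB
    linarith⟩

end Growth

/-! ### The upper bound -/

theorem hausdorffMeasure_eq_zero_of_frequently_mem {X : Type*} [EMetricSpace X]
    [MeasurableSpace X] [BorelSpace X] {ι : ℕ → Type*} [∀ n, Countable (ι n)] {E : Set X} {s : ℝ}
    (hs : 0 < s) {t : ∀ n, ι n → Set X} {c : ℕ → ENNReal}
    (htc : ∀ᶠ n in atTop, ∑' i, Metric.ediam (t n i) ^ s ≤ c n) (hc : ∑' n, c n ≠ ⊤)
    (hE : ∀ x ∈ E, ∃ᶠ n in atTop, ∃ i, x ∈ t n i) : Measure.hausdorffMeasure s E = 0 := by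
  have h_tail := ENNReal.tendsto_sum_nat_add c hc
  obtain ⟨n₀, hn₀⟩ := eventually_atTop.1 htc
  have h_sum : ∀ᶠ N in atTop, ∑' p : Σ n : ℕ, ι (n + N), Metric.ediam (t (p.1 + N) p.2) ^ s ≤
      ∑' n, c (n + N) := by
    filter_upwards [eventually_ge_atTop n₀] with N hN
    rw [ENNReal.tsum_sigma']
    exact ENNReal.tsum_le_tsum fun n => hn₀ _ (by omega)
  have h_diam : ∀ᶠ N in atTop, ∀ p : Σ n : ℕ, ι (n + N),
      Metric.ediam (t (p.1 + N) p.2) ≤ (∑' n, c (n + N)) ^ s⁻¹ := by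
    filter_upwards [h_sum] with N hN p
    rw [ENNReal.le_rpow_inv_iff hs]
    exact (ENNReal.le_tsum p).trans hN
  have h_radius : Tendsto (fun N => (∑' n, c (n + N)) ^ s⁻¹) atTop (nhds 0) := by
    simpa [hs] using h_tail.ennrpow_const s⁻¹
  refine le_antisymm ((Measure.hausdorffMeasure_le_liminf_tsum s E _ h_radius
    (fun N (p : Σ n : ℕ, ι (n + N)) => t (p.1 + N) p.2) h_diam
    (Eventually.of_forall fun N x hx => ?_)).trans ?_) zero_le
  · obtain ⟨n, hn, i, hi⟩ := frequently_atTop.1 (hE x hx) N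
    obtain ⟨k, rfl⟩ := Nat.exists_eq_add_of_le' hn
    exact mem_iUnion.2 ⟨⟨k, i⟩, hi⟩
  · refine (Tendsto.liminf_eq ?_).le
    exact tendsto_of_tendsto_of_tendsto_of_le_of_le' tendsto_const_nhds h_tail
      (Eventually.of_forall fun _ => zero_le) h_sum

/-- The set `E(ψ)` of points which, for infinitely many `n`, have two digits of size at least
`ψ n` among the first `n`. -/
def twoLargeDigitSet (ψ : ℕ → ℝ) : Set ℝ :=
  {x | x ∈ Ioo (0 : ℝ) 1 ∧ Irrational x ∧
    {n : ℕ | ∃ k l : ℕ, 1 ≤ k ∧ k ≤ n ∧ 1 ≤ l ∧ l ≤ n ∧ k ≠ l ∧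
      ψ n ≤ (pq x k : ℝ) ∧ ψ n ≤ (pq x l : ℝ)}.Infinite}

/-- The irrational points whose digits start with `w` followed by a digit of size at least `H`. -/
def largeDigitCylinder (w : List ℕ+) (H : ℝ) : Set ℝ :=
  {x | x ∈ Ioo (0 : ℝ) 1 ∧ Irrational x ∧ digitPrefix (digitSeq x) w.length = w ∧
    H ≤ pq x (w.length + 1)}

theorem ediam_largeDigitCylinder_le (w : List ℕ+) {H : ℝ} (hH : 0 < H) :
    Metric.ediam (largeDigitCylinder w H) ≤ ENNReal.ofReal (1 / ((convDen w : ℝ) ^ 2 * H)) := by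
  have h_tail {x : ℝ} (hx : x ∈ largeDigitCylinder w H) :
      ∃ t ∈ Icc 0 (1 / H), x = invBranch w t := by
    obtain ⟨hx01, hxi, hxw, hxH⟩ := hx
    have ht := (gaussMap_iterate_mem hx01 hxi w.length).1.1
    refine ⟨gaussMap^[w.length] x, ⟨ht.le, ?_⟩, ?_⟩
    · rw [le_one_div ht hH]
      exact hxH.trans (Nat.floor_le (by positivity))
    · conv_lhs => rw [eq_invBranch_digitPrefix hx01 hxi w.length, hxw]
  refine Metric.ediam_le fun x hx y hy => ?_
  obtain ⟨t, ht, rfl⟩ := h_tail hx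
  obtain ⟨u, hu, rfl⟩ := h_tail hy
  rw [edist_dist, Real.dist_eq]
  refine ENNReal.ofReal_le_ofReal ((abs_invBranch_sub_le w ht.1 hu.1).trans ?_)
  rw [mul_comm, ← div_div]
  gcongr
  exact abs_sub_le_iff.2 ⟨by linarith [ht.2, hu.1], by linarith [hu.2, ht.1]⟩

theorem rpow_ediam_largeDigitCylinder_le (u v : List ℕ+) {d : ℕ+} {H s ε : ℝ} (hH : 0 < H)
    (hHd : H ≤ d) (hs : 0 ≤ s) (hε : 1 + ε ≤ 2 * s) :
    Metric.ediam (largeDigitCylinder (u ++ d :: v) H) ^ s ≤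
      ENNReal.ofReal (H ^ (-(3 * s - 1 - ε))) * (ENNReal.ofReal ((convDen u : ℝ) ^ (-(2 * s))) *
        (ENNReal.ofReal ((d : ℝ) ^ (-(1 + ε))) *
          ENNReal.ofReal ((convDen v : ℝ) ^ (-(2 * s))))) := by
  have hu := one_le_convDen u
  have hv := one_le_convDen v
  have hw := one_le_convDen (u ++ d :: v)
  have hd : (0 : ℝ) < d := hH.trans_le hHd
  have h_den : (convDen u : ℝ) * (d * convDen v) ≤ convDen (u ++ d :: v) := by
    have h_tail : (d : ℕ) * convDen v ≤ convDen (d :: v) := by simp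
    exact_mod_cast (Nat.mul_le_mul_left _ h_tail).trans (convDen_mul_le_append u (d :: v))
  refine (ENNReal.rpow_le_rpow (ediam_largeDigitCylinder_le _ hH) hs).trans ?_
  rw [ENNReal.ofReal_rpow_of_pos (by positivity), ← ENNReal.ofReal_mul (by positivity),
    ← ENNReal.ofReal_mul (by positivity), ← ENNReal.ofReal_mul (by positivity)]
  apply ENNReal.ofReal_le_ofReal
  calc (1 / ((convDen (u ++ d :: v) : ℝ) ^ 2 * H)) ^ s
      ≤ (1 / (((convDen u : ℝ) * (d * convDen v)) ^ 2 * H)) ^ s := by gcongr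
    _ = H ^ (-s) * ((convDen u : ℝ) ^ (-(2 * s)) *
        ((d : ℝ) ^ (-(2 * s)) * (convDen v : ℝ) ^ (-(2 * s)))) := by
      rw [one_div, Real.inv_rpow (by positivity), ← Real.rpow_neg (by positivity),
        Real.mul_rpow (by positivity) (by positivity), ← Real.rpow_natCast,
        ← Real.rpow_mul (by positivity), Real.mul_rpow (by positivity) (by positivity),
        Real.mul_rpow (by positivity) (by positivity), mul_comm, Nat.cast_two, mul_neg]
    _ ≤ H ^ (-s) * ((convDen u : ℝ) ^ (-(2 * s)) *
        ((H ^ (-(2 * s - 1 - ε)) * (d : ℝ) ^ (-(1 + ε))) * (convDen v : ℝ) ^ (-(2 * s)))) := by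
      gcongr
      rw [show -(2 * s) = -(2 * s - 1 - ε) + -(1 + ε) by ring, Real.rpow_add hd]
      gcongr ?_ * _
      exact Real.rpow_le_rpow_of_nonpos hH hHd (by linarith)
    _ = _ := by
      rw [show -(3 * s - 1 - ε) = -s + -(2 * s - 1 - ε) by ring, Real.rpow_add hH]
      ring

/-- A word of length `m + 1` with one marked letter: the position of that letter, the letters
before it, the letter itself and the letters after it. -/
abbrev MarkedWord (m : ℕ) : Type := Σ k : Fin (m + 1), (Fin k → ℕ+) × ℕ+ × (Fin (m - k) → ℕ+)

/-- The irrational points whose first `m + 2` digits are the letters of `p` and one further digit,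
the latter and the marked letter both being of size at least `H`. -/
def twoLargeDigitCylinder {m : ℕ} (H : ℝ) (p : MarkedWord m) : Set ℝ :=
  {x | H ≤ p.2.2.1 ∧ x ∈ largeDigitCylinder (List.ofFn p.2.1 ++ p.2.2.1 :: List.ofFn p.2.2.2) H}

theorem tsum_rpow_ediam_twoLargeDigitCylinder_le (m : ℕ) {H s ε : ℝ} (hH : 0 < H) (hs : 0 < s)
    (hε : 1 + ε ≤ 2 * s) :
    ∑' p : MarkedWord m, Metric.ediam (twoLargeDigitCylinder H p) ^ s ≤
      ENNReal.ofReal (H ^ (-(3 * s - 1 - ε))) * ((m + 1 : ℕ) *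
        ((∑' d : ℕ+, ENNReal.ofReal ((d : ℝ) ^ (-(1 + ε)))) *
          (ENNReal.ofReal (2 ^ (2 * s)) * denSum m s))) := by
  set Z := ∑' d : ℕ+, ENNReal.ofReal ((d : ℝ) ^ (-(1 + ε)))
  have h_term (p : MarkedWord m) : Metric.ediam (twoLargeDigitCylinder H p) ^ s ≤
      ENNReal.ofReal (H ^ (-(3 * s - 1 - ε))) *
        (ENNReal.ofReal ((convDen (List.ofFn p.2.1) : ℝ) ^ (-(2 * s))) *
          (ENNReal.ofReal ((p.2.2.1 : ℝ) ^ (-(1 + ε))) *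
            ENNReal.ofReal ((convDen (List.ofFn p.2.2.2) : ℝ) ^ (-(2 * s))))) := by
    by_cases hd : H ≤ p.2.2.1
    · exact (ENNReal.rpow_le_rpow (Metric.ediam_mono fun x hx => hx.2) hs.le).trans
        (rpow_ediam_largeDigitCylinder_le _ _ hH hd hs.le hε)
    · have h_empty : twoLargeDigitCylinder H p = ∅ :=
        eq_empty_of_forall_notMem fun x hx => hd hx.1
      rw [h_empty, Metric.ediam_empty, ENNReal.zero_rpow_of_pos hs]
      exact zero_le
  have h_position (k : Fin (m + 1)) : denSum k s * (Z * denSum (m - k) s) ≤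
      Z * (ENNReal.ofReal (2 ^ (2 * s)) * denSum m s) := by
    have h_mul := denSum_mul_le k (m - k) hs.le
    rw [Nat.add_sub_cancel' (Nat.le_of_lt_succ k.2)] at h_mul
    rw [mul_left_comm]
    gcongr
  refine (ENNReal.tsum_le_tsum h_term).trans ?_
  rw [ENNReal.tsum_mul_left, ENNReal.tsum_sigma']
  gcongr
  simp_rw [ENNReal.tsum_prod', ENNReal.tsum_mul_left, ENNReal.tsum_mul_right]
  refine (ENNReal.tsum_le_tsum h_position).trans_eq ?_
  rw [tsum_fintype, Finset.sum_const, Finset.card_univ, Fintype.card_fin, nsmul_eq_mul]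

theorem exists_mem_twoLargeDigitCylinder {x H : ℝ} (hx : x ∈ Ioo (0 : ℝ) 1) (hi : Irrational x)
    {k m : ℕ} (hkm : k ≤ m) (hk : H ≤ pq x (k + 1)) (hm : H ≤ pq x (m + 2)) :
    ∃ p : MarkedWord m, x ∈ twoLargeDigitCylinder H p := by
  refine ⟨⟨⟨k, Nat.lt_succ_of_le hkm⟩, fun i => digitSeq x i, digitSeq x k,
    fun i => digitSeq x (k + (1 + i))⟩, ?_, hx, hi, ?_, ?_⟩
  · rwa [← coe_digitSeq hx hi] at hk
  · have h_split : digitPrefix (digitSeq x) (k + (1 + (m - k))) =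
        (List.ofFn fun i : Fin k => digitSeq x i) ++
          digitSeq x k :: List.ofFn fun i : Fin (m - k) => digitSeq x (k + (1 + i)) := by
      rw [digitPrefix_add, digitPrefix_add]
      simp [digitPrefix]
    simpa [Nat.add_comm] using h_split
  · have h_length : k + (m - k + 1) + 1 = m + 2 := by omega
    simpa [h_length] using hm

theorem frequently_mem_twoLargeDigitCylinder {ψ : ℕ → ℝ} {b : ℝ} (hb : 1 < b)
    (hψ : ∀ᶠ n in atTop, b ^ n ≤ ψ n) {x : ℝ} (hx : x ∈ twoLargeDigitSet ψ) :
    ∃ᶠ m in atTop, ∃ p : MarkedWord m, x ∈ twoLargeDigitCylinder (b ^ (m + 2)) p := by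
  obtain ⟨hx01, hxi, hx_inf⟩ := hx
  have hψ_top : Tendsto ψ atTop atTop :=
    tendsto_atTop_mono' _ hψ (tendsto_pow_atTop_atTop_of_one_lt hb)
  refine frequently_atTop.2 fun m₀ => ?_
  -- A digit exceeding all of the first `m₀ + 2` has a later position.
  have h_early : ∀ᶠ n in atTop, ∀ j ∈ Finset.range (m₀ + 2), (pq x j : ℝ) < ψ n :=
    (Finset.eventually_all _).2 fun j _ => hψ_top.eventually_gt_atTop _
  obtain ⟨n, ⟨k, l, hk, hkn, hl, hln, hkl, hψk, hψl⟩, h_late, hbψ⟩ :=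
    ((Nat.frequently_atTop_iff_infinite.2 hx_inf).and_eventually (h_early.and hψ)).exists
  wlog h_lt : k < l generalizing k l
  · exact this l k hl hln hk hkn hkl.symm hψl hψk (by omega)
  have hml : m₀ + 2 ≤ l := by
    by_contra! h
    exact (h_late l (Finset.mem_range.2 h)).not_ge hψl
  obtain ⟨m, rfl⟩ : ∃ m, l = m + 2 := ⟨l - 2, by omega⟩
  obtain ⟨k, rfl⟩ : ∃ i, k = i + 1 := ⟨k - 1, by omega⟩
  have h_pow : b ^ (m + 2) ≤ ψ n := (pow_le_pow_right₀ hb.le hln).trans hbψ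
  exact ⟨m, by omega, exists_mem_twoLargeDigitCylinder hx01 hxi (by omega) (h_pow.trans hψk)
    (h_pow.trans hψl)⟩

theorem tsum_ofReal_rpow_neg_ne_top {r : ℝ} (hr : 1 < r) :
    ∑' d : ℕ+, ENNReal.ofReal ((d : ℝ) ^ (-r)) ≠ ⊤ := by
  have h_summable : Summable fun n : ℕ => (n : ℝ) ^ (-r) := Real.summable_nat_rpow.2 (by linarith)
  exact (h_summable.comp_injective PNat.coe_injective).tsum_ofReal_ne_top

theorem tsum_pow_rpow_neg_mul_ne_top {b X τ : ℝ} (hb : 0 < b) (hτ : 0 ≤ τ) (hτb : τ < b ^ X)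
    {C : ENNReal} (hC : C ≠ ⊤) :
    ∑' m : ℕ, ENNReal.ofReal ((b ^ (m + 2)) ^ (-X)) *
      ((m + 1 : ℕ) * (C * ENNReal.ofReal (τ ^ m))) ≠ ⊤ := by
  have hbX : 0 < b ^ X := Real.rpow_pos_of_pos hb X
  have hθ : ‖τ / b ^ X‖ < 1 := by
    rwa [Real.norm_of_nonneg (by positivity), div_lt_one hbX]
  have h_summable : Summable fun m : ℕ => ((m + 1 : ℕ) : ℝ) * (τ / b ^ X) ^ m := by
    refine ((summable_pow_mul_geometric_of_norm_lt_one 1 hθ).add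
      (summable_geometric_of_norm_lt_one hθ)).congr fun m => ?_
    push_cast
    ring
  have h_term (m : ℕ) : ENNReal.ofReal ((b ^ (m + 2)) ^ (-X)) *
      ((m + 1 : ℕ) * (C * ENNReal.ofReal (τ ^ m))) = C * ENNReal.ofReal (((b ^ X) ^ 2)⁻¹) *
        ENNReal.ofReal (((m + 1 : ℕ) : ℝ) * (τ / b ^ X) ^ m) := by
    have h_pow : (b ^ (m + 2)) ^ (-X) = ((b ^ X) ^ 2)⁻¹ * ((b ^ X) ^ m)⁻¹ := by
      rw [Real.rpow_neg (by positivity), ← Real.rpow_pow_comm hb.le, pow_add, mul_inv, mul_comm]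
    rw [h_pow, div_pow, div_eq_mul_inv, ENNReal.ofReal_mul (by positivity),
      ENNReal.ofReal_mul (by positivity), ENNReal.ofReal_mul (by positivity),
      ENNReal.ofReal_natCast]
    ring
  simp_rw [h_term]
  rw [ENNReal.tsum_mul_left]
  exact ENNReal.mul_ne_top (ENNReal.mul_ne_top hC ENNReal.ofReal_ne_top)
    h_summable.tsum_ofReal_ne_top

theorem hausdorffMeasure_twoLargeDigitSet_eq_zero {B : ℝ} (hB : 1 < B) {ψ : ℕ → ℝ}
    (hψ : ∀ b, 1 < b → b < B → ∀ᶠ n in atTop, b ^ n ≤ ψ n) {s' s : ℝ}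
    (hs' : s' ∈ subcriticalExponents B) (hs's : s' < s) :
    Measure.hausdorffMeasure s (twoLargeDigitSet ψ) = 0 := by
  have hB0 : 0 < B := zero_lt_one.trans hB
  have h_half := half_lt_of_mem_subcriticalExponents hs'
  set ε := s - s' with hε
  set X := 3 * s - 1 - ε with hX
  have hX0 : 0 < X := by linarith
  set b := B ^ ((3 * s' - 1 + ε) / X) with hb
  have hb1 : 1 < b := Real.one_lt_rpow hB (div_pos (by linarith) hX0)
  have hbB : b < B := Real.rpow_lt_self_of_one_lt hB (by rw [div_lt_one hX0]; linarith)
  have hbX : b ^ X = B ^ (3 * s' - 1 + ε) := by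
    rw [hb, ← Real.rpow_mul hB0.le, div_mul_cancel₀ _ hX0.ne']
  set τ := B ^ (3 * s' - 1 + ε / 2)
  have hτb : τ < b ^ X := hbX ▸ Real.rpow_lt_rpow_of_exponent_lt hB (by linarith)
  refine hausdorffMeasure_eq_zero_of_frequently_mem (by linarith)
    (t := fun m (p : MarkedWord m) => twoLargeDigitCylinder (b ^ (m + 2)) p) ?_
    (tsum_pow_rpow_neg_mul_ne_top (zero_lt_one.trans hb1) (by positivity) hτb
      (ENNReal.mul_ne_top (tsum_ofReal_rpow_neg_ne_top (by linarith : 1 < 1 + ε))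
        (ENNReal.ofReal_ne_top (r := 2 ^ (2 * s)))))
    fun x hx => frequently_mem_twoLargeDigitCylinder hb1 (hψ b hb1 hbB) hx
  filter_upwards [eventually_denSum_le_pow hB0 hs'.2
    (Real.rpow_lt_rpow_of_exponent_lt hB (by linarith) : _ < τ)] with m hm
  refine (tsum_rpow_ediam_twoLargeDigitCylinder_le m (by positivity) (by linarith)
    (by linarith : 1 + ε ≤ 2 * s)).trans ?_
  rw [mul_assoc (∑' d : ℕ+, _)]
  gcongr
  exact (denSum_anti m hs's.le).trans hm

/-! ### Sequences of blocks -/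

/-- The positive integers carry the discrete `σ`-algebra. -/
instance : MeasurableSpace ℕ+ := ⊤

instance : DiscreteMeasurableSpace ℕ+ := ⟨fun _ => trivial⟩

/-- Words of length `K + 2`, the blocks out of which digit sequences are built. -/
abbrev Block (K : ℕ) : Type := Fin (K + 2) → ℕ+

section Blocks

variable {K : ℕ}

/-- The digit sequence obtained by concatenating a sequence of blocks. -/
def blockDigits (ω : ℕ → Block K) (n : ℕ) : ℕ+ := ω (n / (K + 2)) (Fin.ofNat (K + 2) n)

theorem blockDigits_mul_add (ω : ℕ → Block K) (i : ℕ) (j : Fin (K + 2)) :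
    blockDigits ω ((K + 2) * i + j) = ω i j := by
  have h_div : ((K + 2) * i + j) / (K + 2) = i := by
    rw [Nat.mul_add_div (by omega), Nat.div_eq_of_lt j.2, add_zero]
  have h_mod : Fin.ofNat (K + 2) ((K + 2) * i + j) = j :=
    Fin.ext (by rw [Fin.val_ofNat, Nat.mul_add_mod, Nat.mod_eq_of_lt j.2])
  rw [blockDigits, h_div, h_mod]

theorem blockDigits_congr {ω ω' : ℕ → Block K} {m : ℕ} {j : Fin (K + 2)}
    (h : ∀ i < m, ω i = ω' i) (hj : ∀ k < j, ω m k = ω' m k) {n : ℕ}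
    (hn : n < (K + 2) * m + j) : blockDigits ω n = blockDigits ω' n := by
  rcases lt_or_ge n ((K + 2) * m) with hnm | hnm
  · rw [blockDigits, blockDigits, h _ (Nat.div_lt_of_lt_mul hnm)]
  · obtain ⟨k, rfl⟩ := Nat.exists_eq_add_of_le hnm
    have hk : k < j := by omega
    have h_mul_add (ω : ℕ → Block K) := blockDigits_mul_add ω m ⟨k, hk.trans j.2⟩
    exact (h_mul_add ω).trans ((hj _ hk).trans (h_mul_add ω').symm)

theorem digitPrefix_blockDigits_succ (ω : ℕ → Block K) (m : ℕ) :
    digitPrefix (blockDigits ω) ((K + 2) * (m + 1)) =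
      digitPrefix (blockDigits ω) ((K + 2) * m) ++ List.ofFn (ω m) := by
  rw [mul_add, mul_one, digitPrefix_add]
  congr 1
  exact congrArg List.ofFn (funext fun j => blockDigits_mul_add ω m j)

/-- The continuant of the concatenation of the first `m` blocks. -/
def blockDen (ω : ℕ → Block K) (m : ℕ) : ℕ := convDen (digitPrefix (blockDigits ω) ((K + 2) * m))

theorem one_le_blockDen (ω : ℕ → Block K) (m : ℕ) : (1 : ℝ) ≤ blockDen ω m := one_le_convDen _

theorem le_blockDen (ω : ℕ → Block K) (m : ℕ) : (m : ℝ) ≤ blockDen ω m := by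
  refine le_trans ?_ (le_convDen_digitPrefix (blockDigits ω) ((K + 2) * m))
  exact_mod_cast Nat.le_mul_of_pos_left m (by omega)

theorem blockDen_succ_le (ω : ℕ → Block K) (m : ℕ) :
    blockDen ω (m + 1) ≤ 2 * (blockDen ω m * convDen (List.ofFn (ω m))) := by
  rw [blockDen, digitPrefix_blockDigits_succ]
  exact convDen_append_le _ _

theorem convDen_digitPrefix_mul_add_le (ω : ℕ → Block K) (m j : ℕ) :
    (convDen (digitPrefix (blockDigits ω) ((K + 2) * m + j)) : ℝ) ≤
      2 * (blockDen ω m * convDen (digitPrefix (fun i => blockDigits ω ((K + 2) * m + i)) j)) := by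
  rw [digitPrefix_add]
  exact_mod_cast convDen_append_le _ _

/-- The point whose digit sequence is the concatenation of the given blocks. -/
noncomputable def blockPoint (ω : ℕ → Block K) : ℝ := contFrac (blockDigits ω)

theorem measurable_blockDigits (n : ℕ) :
    Measurable fun ω : ℕ → Block K => (blockDigits ω n : ℝ) :=
  (Measurable.of_discrete (f := fun d : ℕ+ => (d : ℝ))).comp
    ((measurable_pi_apply _).comp (measurable_pi_apply _))

theorem measurable_invBranch_blockDigits (k n : ℕ) : Measurable fun ω : ℕ → Block K =>
    invBranch (digitPrefix (fun i => blockDigits ω (k + i)) n) 0 := by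
  induction n generalizing k with
  | zero => exact measurable_const
  | succ n ih =>
    simp_rw [digitPrefix_succ_cons, invBranch_cons]
    have h_tail := ih (k + 1)
    simp_rw [add_assoc, add_comm 1] at h_tail
    exact measurable_const.div ((measurable_blockDigits _).add h_tail)

theorem measurable_blockPoint : Measurable (blockPoint (K := K)) := by
  refine measurable_of_tendsto_metrizable
    (f := fun n ω => invBranch (digitPrefix (blockDigits ω) n) 0) (fun n => ?_)
    (tendsto_pi_nhds.2 fun ω => tendsto_invBranch_contFrac (blockDigits ω))
  simpa using measurable_invBranch_blockDigits 0 n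

end Blocks

theorem convDen_le_prod (w : List ℕ+) : convDen w ≤ (w.map fun a : ℕ+ => (a : ℕ) + 1).prod := by
  induction w with
  | nil => simp
  | cons a w ih =>
    have h_num := convNum_le_convDen w
    rw [convDen_cons, List.map_cons, List.prod_cons]
    nlinarith

theorem convDen_le_pow {w : List ℕ+} {M : ℕ+} (h : ∀ a ∈ w, a ≤ M) :
    convDen w ≤ ((M : ℕ) + 1) ^ w.length := by
  refine (convDen_le_prod w).trans ?_
  have h_prod := List.prod_le_pow_card (w.map fun a : ℕ+ => (a : ℕ) + 1) (M + 1)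
    (List.forall_mem_map.2 fun a ha => Nat.succ_le_succ (h a ha))
  rwa [List.length_map] at h_prod

theorem one_le_abs_sub_of_ne {a b : ℕ+} (h : a ≠ b) : (1 : ℝ) ≤ |(a : ℝ) - b| := by
  have h_int : ((a : ℕ) : ℤ) - (b : ℕ) ≠ 0 := sub_ne_zero.2 (by simpa using h)
  exact_mod_cast Int.one_le_abs h_int

theorem card_filter_abs_sub_le (s : Finset ℕ+) (c : ℕ+) {R : ℝ} (hR : 1 ≤ R) :
    ((s.filter fun u : ℕ+ => |(u : ℝ) - c| ≤ R).card : ℝ) ≤ 3 * R := by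
  have h_card : (s.filter fun u : ℕ+ => |(u : ℝ) - c| ≤ R).card ≤
      (Finset.Icc ((c : ℤ) - ⌊R⌋₊) (c + ⌊R⌋₊)).card := by
    refine Finset.card_le_card_of_injOn (fun u : ℕ+ => (u : ℤ)) (fun u hu => ?_)
      (fun a _ b _ hab => PNat.coe_injective (by simpa using hab))
    have h_abs : |(u : ℝ) - c| ≤ R := (Finset.mem_filter.1 (Finset.mem_coe.1 hu)).2
    have h_int : |((u : ℕ) : ℤ) - (c : ℕ)| ≤ ⌊R⌋ := Int.le_floor.2 (by exact_mod_cast h_abs)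
    rw [Finset.coe_Icc, Set.mem_Icc, Int.natCast_floor_eq_floor (by linarith)]
    constructor <;> linarith [abs_le.1 h_int]
  rw [Int.card_Icc, show ((c : ℤ) + ⌊R⌋₊ + 1 - (c - ⌊R⌋₊)).toNat = 2 * ⌊R⌋₊ + 1 by omega] at h_card
  have h_floor := Nat.floor_le (zero_le_one.trans hR)
  calc _ ≤ ((2 * ⌊R⌋₊ + 1 : ℕ) : ℝ) := Nat.cast_le.2 h_card
    _ ≤ 3 * R := by push_cast; linarith

/-! ### Blocks with two large digits -/

/-- The block `(u, v, 1, …, 1)`. -/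
def bigBlock (K : ℕ) (u v : ℕ+) : Block K := Fin.cons u (Fin.cons v fun _ => 1)

@[simp] theorem bigBlock_zero (K : ℕ) (u v : ℕ+) : bigBlock K u v 0 = u := rfl

@[simp] theorem bigBlock_one (K : ℕ) (u v : ℕ+) : bigBlock K u v 1 = v := rfl

theorem bigBlock_of_two_le {K : ℕ} (u v : ℕ+) : ∀ {j : Fin (K + 2)}, 2 ≤ (j : ℕ) →
    bigBlock K u v j = 1
  | ⟨_ + 2, _⟩, _ => rfl

theorem convDen_bigBlock_le {K : ℕ} {h u v : ℕ+} (hu : u < 2 * h) (hv : v < 2 * h) :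
    (convDen (List.ofFn (bigBlock K u v)) : ℝ) ≤ 4 * 2 ^ K * (h : ℝ) ^ 2 := by
  have hu' : (u : ℕ) + 1 ≤ 2 * h := hu
  have hv' : (v : ℕ) + 1 ≤ 2 * h := hv
  have h_prod : convDen (List.ofFn (bigBlock K u v)) ≤ ((u : ℕ) + 1) * ((v + 1) * 2 ^ K) :=
    (convDen_le_prod _).trans_eq (by simp [bigBlock, List.ofFn_succ, List.ofFn_const])
  have h_nat : convDen (List.ofFn (bigBlock K u v)) ≤ 2 * h * (2 * h * 2 ^ K) :=
    h_prod.trans (by gcongr)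
  calc _ ≤ ((2 * h * (2 * h * 2 ^ K) : ℕ) : ℝ) := Nat.cast_le.2 h_nat
    _ = _ := by push_cast; ring

/-- The pairs of integers in `[h, 2h)`. -/
def bigPairs (h : ℕ+) : Finset (ℕ+ × ℕ+) := Finset.Ico h (2 * h) ×ˢ Finset.Ico h (2 * h)

theorem card_Ico_two_mul (h : ℕ+) : (Finset.Ico h (2 * h)).card = h := by
  rw [PNat.card_Ico, PNat.mul_coe]
  change 2 * (h : ℕ) - h = h
  omega

theorem card_bigPairs (h : ℕ+) : (bigPairs h).card = (h : ℕ) ^ 2 := by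
  rw [bigPairs, Finset.card_product, card_Ico_two_mul, sq]

theorem bigPairs_nonempty (h : ℕ+) : (bigPairs h).Nonempty := by
  rw [← Finset.card_pos, card_bigPairs]
  exact pow_pos h.pos 2

/-- The law of the block `(u, v, 1, …, 1)` for independent uniform `u, v ∈ [h, 2h)`. -/
noncomputable def bigLaw (K : ℕ) (h : ℕ+) : PMF (Block K) :=
  (PMF.uniformOfFinset (bigPairs h) (bigPairs_nonempty h)).map fun p => bigBlock K p.1 p.2

theorem exists_eq_bigBlock {K : ℕ} {h : ℕ+} {w : Block K} (hw : w ∈ (bigLaw K h).support) :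
    ∃ u v, (h ≤ u ∧ u < 2 * h) ∧ (h ≤ v ∧ v < 2 * h) ∧ w = bigBlock K u v := by
  rw [bigLaw, PMF.support_map, PMF.support_uniformOfFinset] at hw
  obtain ⟨⟨u, v⟩, huv, rfl⟩ := hw
  obtain ⟨hu, hv⟩ := Finset.mem_product.1 (Finset.mem_coe.1 huv)
  exact ⟨u, v, Finset.mem_Ico.1 hu, Finset.mem_Ico.1 hv, rfl⟩

theorem eq_of_mem_support_bigLaw {K : ℕ} {h : ℕ+} {w w' : Block K}
    (hw : w ∈ (bigLaw K h).support) (hw' : w' ∈ (bigLaw K h).support) (h_zero : w 0 = w' 0)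
    (h_one : w 1 = w' 1) : w = w' := by
  obtain ⟨u, v, -, -, rfl⟩ := exists_eq_bigBlock hw
  obtain ⟨u', v', -, -, rfl⟩ := exists_eq_bigBlock hw'
  simp only [bigBlock_zero, bigBlock_one] at h_zero h_one
  rw [h_zero, h_one]

theorem add_two_le_four_mul {h u : ℕ+} (hu : u < 2 * h) : (u : ℝ) + 2 ≤ 4 * h := by
  have hu' : (u : ℕ) + 1 ≤ 2 * h := hu
  exact_mod_cast (by linarith [h.pos] : (u : ℕ) + 2 ≤ 4 * h)

theorem add_two_le_of_mem_support_bigLaw {K : ℕ} {h : ℕ+} {w : Block K}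
    (hw : w ∈ (bigLaw K h).support) : (w 0 : ℝ) + 2 ≤ 4 * h ∧ (w 1 : ℝ) + 2 ≤ 4 * h := by
  obtain ⟨u, v, hu, hv, rfl⟩ := exists_eq_bigBlock hw
  exact ⟨add_two_le_four_mul hu.2, add_two_le_four_mul hv.2⟩

theorem toMeasure_bigLaw_le {K : ℕ} {h : ℕ+} {T : Set (Block K)} {P : Finset (ℕ+ × ℕ+)}
    (hP : ∀ p ∈ bigPairs h, bigBlock K p.1 p.2 ∈ T → p ∈ P) :
    (bigLaw K h).toMeasure T ≤ ENNReal.ofReal (P.card / (h : ℝ) ^ 2) := by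
  classical
  have hh : (0 : ℝ) < h := Nat.cast_pos.2 h.pos
  rw [bigLaw, PMF.toMeasure_map_apply _ _ _ .of_discrete .of_discrete,
    PMF.toMeasure_uniformOfFinset_apply _ _ .of_discrete, card_bigPairs,
    ENNReal.ofReal_div_of_pos (by positivity), ← Nat.cast_pow, ENNReal.ofReal_natCast,
    ENNReal.ofReal_natCast]
  gcongr
  intro p hp
  exact hP p (Finset.mem_filter.1 hp).1 (Finset.mem_filter.1 hp).2

theorem bigLaw_apply_le {K : ℕ} (h : ℕ+) (w : Block K) :
    bigLaw K h w ≤ ENNReal.ofReal (((h : ℝ) ^ 2)⁻¹) := by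
  rw [← PMF.toMeasure_apply_singleton _ _ .of_discrete]
  refine (toMeasure_bigLaw_le (P := {(w 0, w 1)}) fun p _ hp => ?_).trans_eq (by simp)
  simp [← mem_singleton_iff.1 hp]

theorem toMeasure_bigLaw_first_le {K : ℕ} (h u₀ : ℕ+) {R : ℝ} (hR : 1 ≤ R) :
    (bigLaw K h).toMeasure {w | |(w 0 : ℝ) - u₀| ≤ R} ≤ ENNReal.ofReal (3 * R / h) := by
  classical
  have hh : (0 : ℝ) < h := Nat.cast_pos.2 h.pos
  refine (toMeasure_bigLaw_le (P := ((Finset.Ico h (2 * h)).filter fun u : ℕ+ => |(u : ℝ) - u₀| ≤ R)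
    ×ˢ Finset.Ico h (2 * h)) fun p hp hpR => ?_).trans (ENNReal.ofReal_le_ofReal ?_)
  · rw [bigPairs, Finset.mem_product] at hp
    exact Finset.mem_product.2 ⟨Finset.mem_filter.2 ⟨hp.1, hpR⟩, hp.2⟩
  · rw [Finset.card_product, card_Ico_two_mul, Nat.cast_mul, sq, mul_div_mul_right _ _ hh.ne']
    gcongr
    exact card_filter_abs_sub_le _ u₀ hR

theorem toMeasure_bigLaw_second_le {K : ℕ} (h u₀ v₀ : ℕ+) {R : ℝ} (hR : 1 ≤ R) :
    (bigLaw K h).toMeasure {w | w 0 = u₀ ∧ |(w 1 : ℝ) - v₀| ≤ R} ≤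
      ENNReal.ofReal (min (h : ℝ) (3 * R) / (h : ℝ) ^ 2) := by
  classical
  refine (toMeasure_bigLaw_le (P := {u₀} ×ˢ (Finset.Ico h (2 * h)).filter
    fun v : ℕ+ => |(v : ℝ) - v₀| ≤ R) fun p hp hpR => ?_).trans (ENNReal.ofReal_le_ofReal ?_)
  · rw [bigPairs, Finset.mem_product] at hp
    exact Finset.mem_product.2 ⟨Finset.mem_singleton.2 hpR.1, Finset.mem_filter.2 ⟨hp.2, hpR.2⟩⟩
  · rw [Finset.card_product, Finset.card_singleton, one_mul]
    gcongr
    refine le_min ?_ (card_filter_abs_sub_le _ v₀ hR)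
    exact Nat.cast_le.2 ((Finset.card_filter_le _ _).trans_eq (card_Ico_two_mul h))

/-! ### Random block sequences -/

/-- A recipe for a random sequence of independent blocks: at the indices in `big` the block has two
digits of size about `height i`, at the other indices it follows the fixed finitely supported law
`normalLaw`. -/
structure BlockScheme (K : ℕ) where
  /-- The indices of the blocks with two large digits. -/
  big : ℕ → Prop
  /-- The size of the large digits. -/
  height : ℕ → ℕ+
  /-- The law of the blocks without large digits. -/
  normalLaw : PMF (Block K)
  /-- A bound for the digits of the blocks without large digits. -/
  digitBound : ℕ+
  two_le_height : ∀ i, 2 ≤ height i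
  le_digitBound : ∀ w ∈ normalLaw.support, ∀ j, w j ≤ digitBound

namespace BlockScheme

variable {K : ℕ} (S : BlockScheme K)

open Classical in
/-- The law of the `i`-th block. -/
noncomputable def law (i : ℕ) : PMF (Block K) :=
  if S.big i then bigLaw K (S.height i) else S.normalLaw

theorem law_of_big {i : ℕ} (hi : S.big i) : S.law i = bigLaw K (S.height i) := if_pos hi

theorem law_of_not_big {i : ℕ} (hi : ¬ S.big i) : S.law i = S.normalLaw := if_neg hi

/-- The law of the whole sequence of blocks. -/
noncomputable def measure : Measure (ℕ → Block K) :=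
  Measure.infinitePi fun i => (S.law i).toMeasure

instance : IsProbabilityMeasure S.measure := by
  unfold measure
  infer_instance

/-- The block sequences all of whose blocks are charged by their laws. -/
def typical : Set (ℕ → Block K) := {ω | ∀ i, ω i ∈ (S.law i).support}

theorem measure_cylinder (ω : ℕ → Block K) (m : ℕ) (T : Set (Block K)) :
    S.measure {ω' | (∀ i < m, ω i = ω' i) ∧ ω' m ∈ T} =
      (∏ i ∈ Finset.range m, S.law i (ω i)) * (S.law m).toMeasure T := by
  have h_pi : {ω' : ℕ → Block K | (∀ i < m, ω i = ω' i) ∧ ω' m ∈ T} =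
      Set.pi (Finset.range (m + 1)) (Function.update (fun i => {ω i}) m T) := by
    ext ω'
    refine ⟨fun h i hi => ?_, fun h => ⟨fun i hi => ?_, ?_⟩⟩
    · rcases (Finset.mem_range_succ_iff.1 hi).lt_or_eq with hi | rfl
      · rw [Function.update_of_ne hi.ne]
        exact (h.1 i hi).symm
      · rw [Function.update_self]
        exact h.2
    · simpa [hi.ne, eq_comm] using h i (Finset.mem_range_succ_iff.2 hi.le)
    · simpa using h m (Finset.self_mem_range_succ m)
  rw [h_pi, measure, Measure.infinitePi_pi _ (fun _ _ => .of_discrete), Finset.prod_range_succ,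
    Function.update_self]
  congr 1
  refine Finset.prod_congr rfl fun i hi => ?_
  rw [Function.update_of_ne (Finset.mem_range.1 hi).ne, PMF.toMeasure_apply_singleton _ _
    .of_discrete]

theorem measure_typical_compl : S.measure S.typicalᶜ = 0 := by
  have h_union : S.typicalᶜ = ⋃ i, Function.eval i ⁻¹' (S.law i).supportᶜ := by
    ext ω
    simp [typical]
  rw [h_union, measure_iUnion_null_iff]
  intro i
  rw [← Measure.map_apply (measurable_pi_apply i) .of_discrete, measure,
    Measure.infinitePi_map_eval, PMF.toMeasure_apply_eq_zero_iff _ .of_discrete]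
  exact disjoint_compl_right

variable {S} {ω ω' : ℕ → Block K} {m : ℕ}

theorem mem_support_bigLaw (hω : ω ∈ S.typical) (hm : S.big m) :
    ω m ∈ (bigLaw K (S.height m)).support := S.law_of_big hm ▸ hω m

theorem apply_le_digitBound (hω : ω ∈ S.typical) (hm : ¬ S.big m) (j : Fin (K + 2)) :
    ω m j ≤ S.digitBound := S.le_digitBound _ (S.law_of_not_big hm ▸ hω m) j

theorem two_le_apply_of_big (hω : ω ∈ S.typical) (hm : S.big m) {j : Fin (K + 2)}
    (hj : (j : ℕ) < 2) : 2 ≤ ω m j := by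
  obtain ⟨u, v, hu, hv, h_eq⟩ := exists_eq_bigBlock (mem_support_bigLaw hω hm)
  have h_height := S.two_le_height m
  rw [h_eq]
  match j, hj with
  | ⟨0, _⟩, _ => exact h_height.trans hu.1
  | ⟨1, _⟩, _ => exact h_height.trans hv.1

theorem blockDigits_le_or_two_le (hω : ω ∈ S.typical) (hω' : ω' ∈ S.typical) (n : ℕ) :
    (blockDigits ω n ≤ S.digitBound ∧ blockDigits ω' n ≤ S.digitBound) ∨
      (2 ≤ blockDigits ω n ∧ 2 ≤ blockDigits ω' n) := by
  simp only [blockDigits]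
  generalize n / (K + 2) = i
  generalize Fin.ofNat (K + 2) n = j
  by_cases hi : S.big i
  · rcases lt_or_ge (j : ℕ) 2 with hj | hj
    · exact .inr ⟨two_le_apply_of_big hω hi hj, two_le_apply_of_big hω' hi hj⟩
    · obtain ⟨u, v, -, -, h_eq⟩ := exists_eq_bigBlock (mem_support_bigLaw hω hi)
      obtain ⟨u', v', -, -, h_eq'⟩ := exists_eq_bigBlock (mem_support_bigLaw hω' hi)
      rw [h_eq, h_eq', bigBlock_of_two_le u v hj, bigBlock_of_two_le u' v' hj]
      exact .inl ⟨one_le, one_le⟩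
  · exact .inl ⟨apply_le_digitBound hω hi j, apply_le_digitBound hω' hi j⟩

theorem abs_sub_le_mul_abs_blockPoint_sub (hω : ω ∈ S.typical) (hω' : ω' ∈ S.typical)
    (h : ∀ i < m, ω i = ω' i) {j : Fin (K + 2)} (hj : ∀ k < j, ω m k = ω' m k) :
    |(ω m j - ω' m j : ℝ)| ≤ (S.digitBound + 1) * ((ω m j + 2) * (ω' m j + 2)) *
      (convDen (digitPrefix (blockDigits ω) ((K + 2) * m + j)) : ℝ) ^ 2 *
        |blockPoint ω - blockPoint ω'| := by
  have h_digit := abs_digit_sub_le_mul_abs_contFrac_sub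
    (fun _ => blockDigits_congr h hj) (blockDigits_le_or_two_le hω hω' _)
  rwa [blockDigits_mul_add, blockDigits_mul_add] at h_digit

/-- The constant in the separation of points whose first distinct blocks have no large digits. -/
noncomputable def sepConst (S : BlockScheme K) : ℝ :=
  (S.digitBound + 1) * (S.digitBound + 2) ^ 2 * (2 * (S.digitBound + 1) ^ (K + 2)) ^ 2

theorem sepConst_pos (S : BlockScheme K) : 0 < S.sepConst := by
  unfold sepConst
  positivity

theorem convDen_digitPrefix_mul_add_le_of_not_big (hω : ω ∈ S.typical) (hm : ¬ S.big m)
    (j : Fin (K + 2)) : (convDen (digitPrefix (blockDigits ω) ((K + 2) * m + j)) : ℝ) ≤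
      blockDen ω m * (2 * (S.digitBound + 1) ^ (K + 2)) := by
  have h_mem : ∀ a ∈ digitPrefix (fun i => blockDigits ω ((K + 2) * m + i)) j,
      a ≤ S.digitBound := by
    intro a ha
    obtain ⟨i, rfl⟩ := (List.mem_ofFn' _ _).1 ha
    exact (blockDigits_mul_add ω m ⟨i, i.2.trans j.2⟩).trans_le (apply_le_digitBound hω hm _)
  have h_pow := convDen_le_pow h_mem
  rw [length_digitPrefix] at h_pow
  have h_pow' : (convDen (digitPrefix (fun i => blockDigits ω ((K + 2) * m + i)) j) : ℝ) ≤
      (S.digitBound + 1) ^ (K + 2) := by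
    exact_mod_cast h_pow.trans (Nat.pow_le_pow_right (by omega) j.2.le)
  calc _ ≤ _ := convDen_digitPrefix_mul_add_le ω m j
    _ ≤ 2 * (blockDen ω m * (S.digitBound + 1) ^ (K + 2)) := by gcongr
    _ = _ := by ring

theorem one_le_sepConst_mul_of_not_big (hω : ω ∈ S.typical) (hω' : ω' ∈ S.typical)
    (h : ∀ i < m, ω i = ω' i) (hm : ¬ S.big m) (hne : ω m ≠ ω' m) :
    1 ≤ S.sepConst * (blockDen ω m : ℝ) ^ 2 * |blockPoint ω - blockPoint ω'| := by
  obtain ⟨j, hj⟩ := exists_minimal_of_wellFoundedLT _ (Function.ne_iff.1 hne)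
  have h_lt : ∀ k < j, ω m k = ω' m k := fun k hk => not_not.1 (hj.not_prop_of_lt hk)
  have h_le : (ω m j : ℝ) ≤ S.digitBound := Nat.cast_le.2 (apply_le_digitBound hω hm j)
  have h_le' : (ω' m j : ℝ) ≤ S.digitBound := Nat.cast_le.2 (apply_le_digitBound hω' hm j)
  calc 1 ≤ _ := one_le_abs_sub_of_ne hj.prop
    _ ≤ _ := abs_sub_le_mul_abs_blockPoint_sub hω hω' h h_lt
    _ ≤ (S.digitBound + 1) * ((S.digitBound + 2) * (S.digitBound + 2)) *
        (blockDen ω m * (2 * (S.digitBound + 1) ^ (K + 2))) ^ 2 *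
          |blockPoint ω - blockPoint ω'| := by
      gcongr
      exact convDen_digitPrefix_mul_add_le_of_not_big hω hm j
    _ = _ := by rw [sepConst]; ring

theorem abs_sub_zero_le_of_big (hω : ω ∈ S.typical) (hω' : ω' ∈ S.typical)
    (h : ∀ i < m, ω i = ω' i) (hm : S.big m) : |(ω m 0 - ω' m 0 : ℝ)| ≤
      16 * (S.digitBound + 1) * (S.height m : ℝ) ^ 2 * (blockDen ω m : ℝ) ^ 2 *
        |blockPoint ω - blockPoint ω'| := by
  have h_four := (add_two_le_of_mem_support_bigLaw (mem_support_bigLaw hω hm)).1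
  have h_four' := (add_two_le_of_mem_support_bigLaw (mem_support_bigLaw hω' hm)).1
  calc _ ≤ _ := abs_sub_le_mul_abs_blockPoint_sub hω hω' h (j := 0) fun k hk => absurd hk (by simp)
    _ ≤ (S.digitBound + 1) * (4 * S.height m * (4 * S.height m)) * (blockDen ω m : ℝ) ^ 2 *
        |blockPoint ω - blockPoint ω'| := by
      gcongr
      rfl
    _ = _ := by ring

theorem abs_sub_one_le_of_big (hω : ω ∈ S.typical) (hω' : ω' ∈ S.typical)
    (h : ∀ i < m, ω i = ω' i) (hm : S.big m) (h_zero : ω m 0 = ω' m 0) :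
    |(ω m 1 - ω' m 1 : ℝ)| ≤
      256 * (S.digitBound + 1) * (S.height m : ℝ) ^ 4 * (blockDen ω m : ℝ) ^ 2 *
        |blockPoint ω - blockPoint ω'| := by
  have h_four := (add_two_le_of_mem_support_bigLaw (mem_support_bigLaw hω hm)).2
  have h_four' := (add_two_le_of_mem_support_bigLaw (mem_support_bigLaw hω' hm)).2
  have h_two : (ω m 0 : ℝ) ≤ 2 * S.height m := by
    obtain ⟨u, v, hu, -, h_eq⟩ := exists_eq_bigBlock (mem_support_bigLaw hω hm)
    rw [h_eq, bigBlock_zero]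
    exact_mod_cast hu.2.le
  have h_den : (convDen (digitPrefix (blockDigits ω) ((K + 2) * m + 1)) : ℝ) ≤
      4 * (blockDen ω m * S.height m) := by
    have h_one : digitPrefix (fun i => blockDigits ω ((K + 2) * m + i)) 1 = [ω m 0] := by
      simpa [digitPrefix] using blockDigits_mul_add ω m 0
    calc _ ≤ _ := convDen_digitPrefix_mul_add_le ω m 1
      _ = 2 * (blockDen ω m * (ω m 0 : ℝ)) := by
        rw [h_one]
        simp
      _ ≤ 2 * (blockDen ω m * (2 * S.height m)) := by gcongr
      _ = _ := by ring
  calc _ ≤ _ := abs_sub_le_mul_abs_blockPoint_sub hω hω' h (j := 1) fun k hk => by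
        rwa [(Fin.lt_one_iff k).1 hk]
    _ ≤ (S.digitBound + 1) * (4 * S.height m * (4 * S.height m)) *
        (4 * (blockDen ω m * S.height m)) ^ 2 * |blockPoint ω - blockPoint ω'| := by
      gcongr
      exact h_den
    _ = _ := by ring

end BlockScheme

/-! ### Hölder bounds for the random points -/

theorem min_one_le_rpow {y s : ℝ} (hy : 0 ≤ y) (hs : 0 ≤ s) (hs1 : s ≤ 1) : min 1 y ≤ y ^ s := by
  rcases le_total 1 y with h | h
  · exact (min_le_left _ _).trans (Real.one_le_rpow h hs)
  · exact (min_le_right _ _).trans (Real.self_le_rpow_of_le_one hy h hs1)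

theorem mul_rpow_mul_min_le {α A q X Y s : ℝ} (hα : α ≤ A) (hA : 0 ≤ A) (hq : 0 < q) (hX : 0 ≤ X)
    (hY : 0 ≤ Y) (hs : 0 ≤ s) (hs1 : s ≤ 1) :
    α * q ^ (-(2 * s)) * min 1 (X * q ^ 2 * Y) ≤ A * Y ^ s * X ^ s := by
  have h_cancel : q ^ (-(2 * s)) * (q ^ 2) ^ s = 1 := by
    rw [← Real.rpow_natCast_mul hq.le, ← Real.rpow_add hq, Nat.cast_two, neg_add_cancel,
      Real.rpow_zero]
  calc α * q ^ (-(2 * s)) * min 1 (X * q ^ 2 * Y)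
      ≤ A * q ^ (-(2 * s)) * (X * q ^ 2 * Y) ^ s := by
        gcongr
        exact min_one_le_rpow (by positivity) hs hs1
    _ = A * Y ^ s * X ^ s * (q ^ (-(2 * s)) * (q ^ 2) ^ s) := by
        rw [Real.mul_rpow (by positivity) hY, Real.mul_rpow hX (by positivity)]
        ring
    _ = _ := by rw [h_cancel, mul_one]

namespace BlockScheme

variable {K : ℕ} {S : BlockScheme K} {s C r : ℝ} {α : ℕ → ℝ} {ω ω' : ℕ → Block K} {m : ℕ}

/-- The weights `α` control the mass of the cylinders of a scheme at the exponent `s`: the cylinder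
of the first `m` blocks `ω 0, …, ω (m - 1)`, whose continuant is `q`, has mass at most
`α m * q ^ (-2s)`. -/
structure IsMassBound (S : BlockScheme K) (s C : ℝ) (α : ℕ → ℝ) : Prop where
  nonneg : ∀ i, 0 ≤ α i
  le : ∀ i, α i ≤ C
  le_height : ∀ i, S.big i → α i ≤ (S.height i : ℝ) ^ (-(3 * s - 1))
  prod_le : ∀ ω ∈ S.typical, ∀ m, ∏ i ∈ Finset.range m, S.law i (ω i) ≤
    ENNReal.ofReal (α m * (blockDen ω m : ℝ) ^ (-(2 * s)))

theorem IsMassBound.bound_nonneg (h : S.IsMassBound s C α) : 0 ≤ C := (h.nonneg 0).trans (h.le 0)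

theorem IsMassBound.measure_le (h : S.IsMassBound s C α) (hω : ω ∈ S.typical)
    {P : Set (ℕ → Block K)} {T : Set (Block K)} (hP : ∀ ω' ∈ P, (∀ i < m, ω i = ω' i) ∧ ω' m ∈ T)
    {t : ℝ} (hT : (S.law m).toMeasure T ≤ ENNReal.ofReal t) :
    S.measure P ≤ ENNReal.ofReal (α m * (blockDen ω m : ℝ) ^ (-(2 * s)) * t) := by
  refine (measure_mono hP).trans ((S.measure_cylinder ω m T).trans_le ?_)
  rw [ENNReal.ofReal_mul (mul_nonneg (h.nonneg m) (by positivity))]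
  exact mul_le_mul' (h.prod_le ω hω m) hT

theorem IsMassBound.measure_singleton (h : S.IsMassBound s C α) (hs : 1 / 2 ≤ s)
    (hω : ω ∈ S.typical) : S.measure {ω} = 0 := by
  have h_le (m : ℕ) : S.measure {ω} ≤ ENNReal.ofReal (C * ((m + 1 : ℕ) : ℝ)⁻¹) := by
    have hq := one_le_blockDen ω (m + 1)
    have hm := le_blockDen ω (m + 1)
    refine (h.measure_le (m := m + 1) (T := univ) (t := 1) hω ?_ (by simp)).trans
      (ENNReal.ofReal_le_ofReal ?_)
    · rintro _ rfl
      exact ⟨fun _ _ => rfl, mem_univ _⟩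
    · calc α (m + 1) * (blockDen ω (m + 1) : ℝ) ^ (-(2 * s)) * 1
          ≤ C * (blockDen ω (m + 1) : ℝ) ^ (-1 : ℝ) * 1 := by
            gcongr
            · exact h.bound_nonneg
            · exact h.le _
            · linarith
        _ ≤ C * ((m + 1 : ℕ) : ℝ)⁻¹ := by
            rw [mul_one, Real.rpow_neg_one]
            have := h.bound_nonneg
            gcongr
  have h_lim : Tendsto (fun m : ℕ => ENNReal.ofReal (C * ((m + 1 : ℕ) : ℝ)⁻¹)) atTop (nhds 0) := by
    have h_inv := (tendsto_add_atTop_iff_nat 1).2 (tendsto_inv_atTop_nhds_zero_nat (𝕜 := ℝ))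
    simpa using ENNReal.tendsto_ofReal (h_inv.const_mul C)
  exact le_antisymm (ge_of_tendsto' h_lim h_le) zero_le

/-- The typical block sequences that share their first `m` blocks with `ω` and whose points are
within `r` of that of `ω`. -/
def near (S : BlockScheme K) (ω : ℕ → Block K) (m : ℕ) (r : ℝ) : Set (ℕ → Block K) :=
  {ω' ∈ S.typical | (∀ i < m, ω i = ω' i) ∧ |blockPoint ω - blockPoint ω'| ≤ r}

theorem nonneg_of_mem_near (hω' : ω' ∈ S.near ω m r) : 0 ≤ r := (abs_nonneg _).trans hω'.2.2

theorem IsMassBound.measure_near_le_of_not_big (h : S.IsMassBound s C α) (hs : 0 ≤ s) (hs1 : s ≤ 1)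
    (hω : ω ∈ S.typical) (hm : ¬ S.big m) (hω' : ω' ∈ S.near ω m r) (hne : ω m ≠ ω' m) :
    S.measure (S.near ω m r) ≤ ENNReal.ofReal (C * (S.sepConst * r) ^ s) := by
  have hr := nonneg_of_mem_near hω'
  have h_pos := S.sepConst_pos
  have hq : (0 : ℝ) < blockDen ω m := zero_lt_one.trans_le (one_le_blockDen ω m)
  have h_one : 1 ≤ S.sepConst * r * (blockDen ω m : ℝ) ^ 2 * 1 :=
    calc 1 ≤ _ := one_le_sepConst_mul_of_not_big hω hω'.1 hω'.2.1 hm hne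
      _ ≤ S.sepConst * (blockDen ω m : ℝ) ^ 2 * r := by
        gcongr
        exact hω'.2.2
      _ = _ := by ring
  refine (h.measure_le (T := univ) (t := 1) hω (fun _ hω'' => ⟨hω''.2.1, mem_univ _⟩)
    (by simp)).trans (ENNReal.ofReal_le_ofReal ?_)
  have h_real := mul_rpow_mul_min_le (h.le m) h.bound_nonneg hq (mul_nonneg h_pos.le hr)
    zero_le_one hs hs1
  rwa [min_eq_left h_one, Real.one_rpow, mul_one C] at h_real

theorem IsMassBound.measure_near_le_of_first_ne (h : S.IsMassBound s C α) (hs : 1 / 2 ≤ s)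
    (hs1 : s ≤ 1) (hω : ω ∈ S.typical) (hm : S.big m) (hω' : ω' ∈ S.near ω m r)
    (hne : ω m 0 ≠ ω' m 0) :
    S.measure (S.near ω m r) ≤ ENNReal.ofReal ((48 * (S.digitBound + 1) * r) ^ s) := by
  have hr := nonneg_of_mem_near hω'
  have hq : (0 : ℝ) < blockDen ω m := zero_lt_one.trans_le (one_le_blockDen ω m)
  have hh : (1 : ℝ) ≤ S.height m := Nat.one_le_cast.2 (S.height m).pos
  have hh0 : (0 : ℝ) < S.height m := zero_lt_one.trans_le hh
  set R : ℝ := 16 * (S.digitBound + 1) * (S.height m : ℝ) ^ 2 * (blockDen ω m : ℝ) ^ 2 * r with hR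
  have h_le : ∀ ω'' ∈ S.near ω m r, |(ω'' m 0 - ω m 0 : ℝ)| ≤ R := fun ω'' hω'' =>
    (abs_sub_comm _ _).trans_le <|
      (abs_sub_zero_le_of_big hω hω''.1 hω''.2.1 hm).trans (by rw [hR]; gcongr; exact hω''.2.2)
  have h_law : (S.law m).toMeasure {w | |(w 0 : ℝ) - ω m 0| ≤ R} ≤ ENNReal.ofReal
      (min 1 (48 * (S.digitBound + 1) * r * (blockDen ω m : ℝ) ^ 2 * S.height m)) := by
    rw [ENNReal.ofReal_min, ENNReal.ofReal_one]
    refine le_min prob_le_one ?_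
    rw [S.law_of_big hm]
    refine (toMeasure_bigLaw_first_le _ _ ((one_le_abs_sub_of_ne hne.symm).trans
      (h_le ω' hω'))).trans_eq (congrArg ENNReal.ofReal ?_)
    rw [hR]
    field_simp
    ring
  refine (h.measure_le (T := {w | |(w 0 : ℝ) - ω m 0| ≤ R}) hω
    (fun ω'' hω'' => ⟨hω''.2.1, h_le ω'' hω''⟩) h_law).trans (ENNReal.ofReal_le_ofReal ?_)
  · have h_height : (S.height m : ℝ) ^ (-(3 * s - 1)) * (S.height m : ℝ) ^ s ≤ 1 := by
      rw [← Real.rpow_add hh0]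
      exact Real.rpow_le_one_of_one_le_of_nonpos hh (by linarith)
    exact (mul_rpow_mul_min_le (h.le_height m hm) (by positivity) hq (by positivity) hh0.le
      (by linarith) hs1).trans (mul_le_of_le_one_left (by positivity) h_height)

theorem IsMassBound.measure_near_le_of_second_ne (h : S.IsMassBound s C α) (hs : 0 ≤ s)
    (hs1 : s ≤ 1) (hω : ω ∈ S.typical) (hm : S.big m)
    (h_first : ∀ ω' ∈ S.near ω m r, ω m 0 = ω' m 0) (hω' : ω' ∈ S.near ω m r)
    (hne : ω m 1 ≠ ω' m 1) :
    S.measure (S.near ω m r) ≤ ENNReal.ofReal ((768 * (S.digitBound + 1) * r) ^ s) := by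
  have hr := nonneg_of_mem_near hω'
  have hq : (0 : ℝ) < blockDen ω m := zero_lt_one.trans_le (one_le_blockDen ω m)
  have hh0 : (0 : ℝ) < S.height m := Nat.cast_pos.2 (S.height m).pos
  set R : ℝ := 256 * (S.digitBound + 1) * (S.height m : ℝ) ^ 4 * (blockDen ω m : ℝ) ^ 2 * r with hR
  have h_le : ∀ ω'' ∈ S.near ω m r, |(ω'' m 1 - ω m 1 : ℝ)| ≤ R := fun ω'' hω'' =>
    (abs_sub_comm _ _).trans_le <|
      (abs_sub_one_le_of_big hω hω''.1 hω''.2.1 hm (h_first ω'' hω'')).trans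
        (by rw [hR]; gcongr; exact hω''.2.2)
  set X : ℝ := 768 * (S.digitBound + 1) * r with hX
  have h_law : (S.law m).toMeasure {w | w 0 = ω m 0 ∧ |(w 1 : ℝ) - ω m 1| ≤ R} ≤ ENNReal.ofReal
      ((S.height m : ℝ)⁻¹ * min 1 (X * (blockDen ω m : ℝ) ^ 2 * (S.height m : ℝ) ^ 3)) := by
    rw [S.law_of_big hm]
    refine (toMeasure_bigLaw_second_le _ _ _ ((one_le_abs_sub_of_ne hne.symm).trans
      (h_le ω' hω'))).trans_eq (congrArg ENNReal.ofReal ?_)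
    rw [show 3 * R = S.height m * (X * (blockDen ω m : ℝ) ^ 2 * (S.height m : ℝ) ^ 3) by
      rw [hR, hX]; ring]
    nth_rw 1 [← mul_one (S.height m : ℝ)]
    rw [← mul_min_of_nonneg _ _ hh0.le]
    field_simp
  refine (h.measure_le (T := {w | w 0 = ω m 0 ∧ |(w 1 : ℝ) - ω m 1| ≤ R}) hω
    (fun ω'' hω'' => ⟨hω''.2.1, (h_first ω'' hω'').symm, h_le ω'' hω''⟩) h_law).trans
    (ENNReal.ofReal_le_ofReal ?_)
  · have h_height : (S.height m : ℝ)⁻¹ *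
        ((S.height m : ℝ) ^ (-(3 * s - 1)) * ((S.height m : ℝ) ^ 3) ^ s) = 1 := by
      rw [← Real.rpow_natCast_mul hh0.le, ← Real.rpow_add hh0, Nat.cast_ofNat,
        show -(3 * s - 1) + 3 * s = 1 by ring, Real.rpow_one, inv_mul_cancel₀ hh0.ne']
    have h_real := mul_rpow_mul_min_le (Y := (S.height m : ℝ) ^ 3) (h.le_height m hm)
      (by positivity) hq (by positivity : 0 ≤ X) (by positivity) hs hs1
    calc _ = (S.height m : ℝ)⁻¹ * (α m * (blockDen ω m : ℝ) ^ (-(2 * s)) *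
          min 1 (X * (blockDen ω m : ℝ) ^ 2 * (S.height m : ℝ) ^ 3)) := by ring
      _ ≤ (S.height m : ℝ)⁻¹ *
          ((S.height m : ℝ) ^ (-(3 * s - 1)) * ((S.height m : ℝ) ^ 3) ^ s * X ^ s) := by gcongr
      _ = X ^ s := by rw [← mul_assoc, h_height, one_mul]

/-- The constant in the Hölder bound of a scheme whose weights are bounded by `C`. -/
noncomputable def holderConst (S : BlockScheme K) (s C : ℝ) : ℝ :=
  (C + 1) * (S.sepConst + 768 * (S.digitBound + 1)) ^ s

theorem holderConst_nonneg (hC : 0 ≤ C) : 0 ≤ S.holderConst s C := by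
  have h_pos := S.sepConst_pos
  unfold holderConst
  positivity

theorem IsMassBound.measure_near_le_of_ne (h : S.IsMassBound s C α) (hs : 1 / 2 ≤ s) (hs1 : s ≤ 1)
    (hω : ω ∈ S.typical) (hω' : ω' ∈ S.near ω m r) (hne : ω m ≠ ω' m) :
    S.measure (S.near ω m r) ≤ ENNReal.ofReal (S.holderConst s C * r ^ s) := by
  have hr := nonneg_of_mem_near hω'
  have hs0 : 0 ≤ s := by linarith
  have hC := h.bound_nonneg
  have h_pos := S.sepConst_pos
  have h_bound : (0 : ℝ) ≤ S.digitBound := Nat.cast_nonneg _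
  set A : ℝ := S.sepConst + 768 * (S.digitBound + 1) with hA
  have h_const {c X : ℝ} (hc0 : 0 ≤ c) (hc : c ≤ C + 1) (hX0 : 0 ≤ X) (hX : X ≤ A) :
      ENNReal.ofReal (c * (X * r) ^ s) ≤ ENNReal.ofReal (S.holderConst s C * r ^ s) := by
    rw [holderConst, ← hA, mul_assoc, ← Real.mul_rpow (by positivity) hr]
    gcongr
  have h_const_one {X : ℝ} := h_const (X := X) zero_le_one (by linarith)
  simp only [one_mul] at h_const_one
  by_cases hm : S.big m
  · by_cases h_first : ∀ ω'' ∈ S.near ω m r, ω m 0 = ω'' m 0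
    · have h_second : ω m 1 ≠ ω' m 1 := fun h_second => hne (eq_of_mem_support_bigLaw
        (mem_support_bigLaw hω hm) (mem_support_bigLaw hω'.1 hm) (h_first ω' hω') h_second)
      exact (h.measure_near_le_of_second_ne hs0 hs1 hω hm h_first hω' h_second).trans
        (h_const_one (by positivity) (by linarith))
    · push Not at h_first
      obtain ⟨ω'', hω'', h_first⟩ := h_first
      exact (h.measure_near_le_of_first_ne hs hs1 hω hm hω'' h_first).trans
        (h_const_one (by positivity) (by rw [hA]; linarith))
  · exact (h.measure_near_le_of_not_big hs0 hs1 hω hm hω' hne).trans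
      (h_const hC (by linarith) h_pos.le (by rw [hA]; linarith))

theorem IsMassBound.measure_near_zero_le (h : S.IsMassBound s C α) (hs : 1 / 2 ≤ s) (hs1 : s ≤ 1)
    (hω : ω ∈ S.typical) :
    S.measure (S.near ω 0 r) ≤ ENNReal.ofReal (S.holderConst s C * r ^ s) := by
  by_cases hex : ∃ m, ∃ ω' ∈ S.near ω 0 r, ω m ≠ ω' m
  · classical
    obtain ⟨ω', hω', hne⟩ := Nat.find_spec hex
    have h_agree : ∀ ω'' ∈ S.near ω 0 r, ω'' ∈ S.near ω (Nat.find hex) r := fun ω'' hω'' =>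
      ⟨hω''.1, fun i hi => not_not.1 fun h_ne => Nat.find_min hex hi ⟨ω'', hω'', h_ne⟩, hω''.2.2⟩
    exact (measure_mono h_agree).trans (h.measure_near_le_of_ne hs hs1 hω (h_agree ω' hω') hne)
  · push Not at hex
    have h_subset : S.near ω 0 r ⊆ {ω} := fun ω' hω' => funext fun m => (hex m ω' hω').symm
    exact (measure_mono_null h_subset (h.measure_singleton hs hω)).trans_le zero_le

theorem IsMassBound.measure_preimage_blockPoint_le (h : S.IsMassBound s C α) (hs : 1 / 2 ≤ s)
    (hs1 : s ≤ 1) {E : Set ℝ} (hE : Metric.ediam E ≠ ⊤) :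
    S.measure (blockPoint ⁻¹' E) ≤ ENNReal.ofReal (S.holderConst s C) * Metric.ediam E ^ s := by
  rw [← measure_inter_conull S.measure_typical_compl]
  rcases (blockPoint ⁻¹' E ∩ S.typical).eq_empty_or_nonempty with h_empty | ⟨ω, hωE, hω⟩
  · rw [h_empty, measure_empty]
    exact zero_le
  · have h_subset : blockPoint ⁻¹' E ∩ S.typical ⊆ S.near ω 0 (Metric.ediam E).toReal := by
      rintro ω' ⟨hω'E, hω'⟩
      refine ⟨hω', by simp, (ENNReal.ofReal_le_iff_le_toReal hE).1 ?_⟩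
      rw [← Real.dist_eq, ← edist_dist]
      exact Metric.edist_le_ediam_of_mem hωE hω'E
    calc _ ≤ _ := measure_mono h_subset
      _ ≤ _ := h.measure_near_zero_le hs hs1 hω
      _ = _ := by
        rw [ENNReal.ofReal_mul (holderConst_nonneg h.bound_nonneg), ← ENNReal.ofReal_rpow_of_nonneg
          ENNReal.toReal_nonneg (by linarith), ENNReal.ofReal_toReal hE]

end BlockScheme

theorem ofReal_le_dimH_of_measure_le {X : Type*} [EMetricSpace X] [MeasurableSpace X]
    [BorelSpace X] {μ : Measure X} {E : Set X} {s : ℝ} {D : ENNReal} (hs : 0 ≤ s) (hD : D ≠ ⊤)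
    (h : ∀ F : Set X, IsClosed F → Metric.ediam F ≤ 1 → μ F ≤ D * Metric.ediam F ^ s)
    (hE : μ E ≠ 0) : ENNReal.ofReal s ≤ dimH E := by
  have hD1 : D + 1 ≠ ⊤ := by simp [hD]
  have h_le : (D + 1)⁻¹ • μ ≤ Measure.hausdorffMeasure s := by
    refine Measure.le_hausdorffMeasure s _ 1 one_pos fun F hF => ?_
    rw [← Metric.ediam_closure] at hF
    rw [Measure.smul_apply, smul_eq_mul, ← ENNReal.div_eq_inv_mul]
    refine ENNReal.div_le_of_le_mul' ?_
    calc μ F ≤ μ (closure F) := measure_mono subset_closure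
      _ ≤ D * Metric.ediam (closure F) ^ s := h _ isClosed_closure hF
      _ ≤ (D + 1) * Metric.ediam F ^ s := by
        rw [Metric.ediam_closure]
        gcongr
        exact le_self_add
  have h_ne : Measure.hausdorffMeasure (s.toNNReal : ℝ) E ≠ 0 := by
    rw [Real.coe_toNNReal s hs]
    refine (lt_of_lt_of_le ?_ (h_le E)).ne'
    rw [Measure.smul_apply, smul_eq_mul]
    exact ENNReal.mul_pos (ENNReal.inv_ne_zero.2 hD1) hE
  exact le_dimH_of_hausdorffMeasure_ne_zero h_ne

theorem ofReal_le_dimH_of_blockScheme {K : ℕ} {S : BlockScheme K} {s C : ℝ} {α : ℕ → ℝ}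
    (h : S.IsMassBound s C α) (hs : 1 / 2 ≤ s) (hs1 : s ≤ 1) {E : Set ℝ}
    (hE : ∀ ω ∈ S.typical, blockPoint ω ∈ E) : ENNReal.ofReal s ≤ dimH E := by
  refine ofReal_le_dimH_of_measure_le (μ := S.measure.map blockPoint)
    (D := ENNReal.ofReal (S.holderConst s C)) (by linarith) ENNReal.ofReal_ne_top
    (fun F hF hF1 => ?_) ?_
  · rw [Measure.map_apply measurable_blockPoint hF.measurableSet]
    exact h.measure_preimage_blockPoint_le hs hs1 (ne_top_of_le_ne_top ENNReal.one_ne_top hF1)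
  · have h_typical : S.measure S.typical ≠ 0 := fun h0 => by
      have h_univ := measure_union_null h0 S.measure_typical_compl
      rw [union_compl_self, measure_univ] at h_univ
      exact one_ne_zero h_univ
    refine (h_typical.bot_lt.trans_le ((measure_mono fun ω hω => hE ω hω).trans
      (Measure.le_map_apply measurable_blockPoint.aemeasurable E))).ne'

/-! ### The mass of the cylinders -/

open Classical in
/-- The mass of the cylinders of the random block sequence, relative to `q ^ (-2s)`. It decreases by
the factor `ρ` at each block, until it reaches the threshold `t i` at an index `i` where large
digits are useful; the block with large digits then placed there brings it back to `C`. -/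
noncomputable def greedyWeight (good : ℕ → Prop) (t : ℕ → ℝ) (C ρ : ℝ) : ℕ → ℝ
  | 0 => 1
  | i + 1 =>
    if good i ∧ greedyWeight good t C ρ i ≤ t i then C else greedyWeight good t C ρ i * ρ

section GreedyWeight

variable {good : ℕ → Prop} {t : ℕ → ℝ} {C ρ : ℝ} {i : ℕ}

theorem greedyWeight_succ_of_le (hi : good i ∧ greedyWeight good t C ρ i ≤ t i) :
    greedyWeight good t C ρ (i + 1) = C := by
  rw [greedyWeight, if_pos hi]

theorem greedyWeight_succ_of_not_le (hi : ¬ (good i ∧ greedyWeight good t C ρ i ≤ t i)) :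
    greedyWeight good t C ρ (i + 1) = greedyWeight good t C ρ i * ρ := by
  rw [greedyWeight, if_neg hi]

theorem greedyWeight_pos (hC : 0 < C) (hρ : 0 < ρ) (i : ℕ) : 0 < greedyWeight good t C ρ i := by
  induction i with
  | zero => exact one_pos
  | succ i ih =>
    rw [greedyWeight]
    split_ifs
    · exact hC
    · positivity

theorem greedyWeight_le (hC : 1 ≤ C) (hρ0 : 0 < ρ) (hρ1 : ρ ≤ 1) (i : ℕ) :
    greedyWeight good t C ρ i ≤ C := by
  induction i with
  | zero => exact hC
  | succ i ih =>
    rw [greedyWeight]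
    split_ifs
    · exact le_rfl
    · exact (mul_le_of_le_one_right (greedyWeight_pos (by linarith) hρ0 i).le hρ1).trans ih

theorem frequently_greedyWeight_le (hρ : 0 < ρ) (hgood : ∃ᶠ i in atTop, good i)
    (ht : ∀ c, ∀ᶠ i : ℕ in atTop, c * ρ ^ i ≤ t i) :
    ∃ᶠ i in atTop, good i ∧ greedyWeight good t C ρ i ≤ t i := by
  by_contra h_not
  obtain ⟨j, hj⟩ := eventually_atTop.1 (not_frequently.1 h_not)
  have h_geom (k : ℕ) :
      greedyWeight good t C ρ (j + k) = greedyWeight good t C ρ j * ρ ^ k := by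
    induction k with
    | zero => simp
    | succ k ih =>
      rw [← add_assoc, greedyWeight_succ_of_not_le (hj _ (by omega)), ih, pow_succ, mul_assoc]
  obtain ⟨i, hi, hit, hji⟩ := (hgood.and_eventually
    ((ht (greedyWeight good t C ρ j / ρ ^ j)).and (eventually_ge_atTop j))).exists
  obtain ⟨k, rfl⟩ := Nat.exists_eq_add_of_le hji
  refine hj _ hji ⟨hi, (h_geom k).trans_le (le_of_eq_of_le ?_ hit)⟩
  rw [pow_add]
  field_simp

end GreedyWeight

theorem rpow_neg_le_rpow_mul_rpow_neg {q q' Q x : ℝ} (hq : 0 < q) (hq' : 0 < q') (hQ : 0 < Q)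
    (hx : 0 ≤ x) (h : q' ≤ Q * q) : q ^ (-x) ≤ Q ^ x * q' ^ (-x) := by
  rw [← inv_mul_le_iff₀ (by positivity), ← Real.rpow_neg hQ.le, ← Real.mul_rpow hQ.le hq.le]
  exact Real.rpow_le_rpow_of_nonpos hq' h (by linarith)

-- The weight `h ^ (-(3s-1))` is the largest one for which the `h ^ (-2)` of the law compensates
-- the growth of the continuant by `h ^ 2`.
theorem mul_rpow_mul_inv_sq_le {α A h q q' s : ℝ} (hs : 1 / 2 ≤ s) (hs1 : s ≤ 1) (hA : 1 ≤ A)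
    (hh : 1 ≤ h) (hq : 0 < q) (hq' : 0 < q') (hα : α ≤ h ^ (-(3 * s - 1)))
    (h_le : q' ≤ A * h ^ 2 * q) :
    α * q ^ (-(2 * s)) * (h ^ 2)⁻¹ ≤ A ^ 2 * q' ^ (-(2 * s)) := by
  have hh0 : 0 < h := by linarith
  have h_A : A ^ (2 * s) ≤ A ^ 2 := by
    rw [← Real.rpow_natCast, Nat.cast_two]
    exact Real.rpow_le_rpow_of_exponent_le hA (by linarith)
  have h_exponent : h ^ (-(3 * s - 1)) * (h ^ 2) ^ (2 * s) * (h ^ 2)⁻¹ ≤ 1 := by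
    rw [← Real.rpow_natCast_mul hh0.le, ← Real.rpow_natCast, ← Real.rpow_neg hh0.le,
      ← Real.rpow_add hh0, ← Real.rpow_add hh0]
    refine Real.rpow_le_one_of_one_le_of_nonpos hh ?_
    push_cast
    linarith
  calc α * q ^ (-(2 * s)) * (h ^ 2)⁻¹
      ≤ h ^ (-(3 * s - 1)) * ((A * h ^ 2) ^ (2 * s) * q' ^ (-(2 * s))) * (h ^ 2)⁻¹ := by
        gcongr
        exact rpow_neg_le_rpow_mul_rpow_neg hq hq' (by positivity) (by linarith) h_le
    _ = A ^ (2 * s) * (h ^ (-(3 * s - 1)) * (h ^ 2) ^ (2 * s) * (h ^ 2)⁻¹) * q' ^ (-(2 * s)) := by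
        rw [Real.mul_rpow (by positivity) (by positivity)]
        ring
    _ ≤ A ^ 2 * 1 * q' ^ (-(2 * s)) := by gcongr
    _ = _ := by rw [mul_one]

theorem mul_rpow_mul_rpow_le {α ρ q q' d s : ℝ} (hs : 0 ≤ s) (hs1 : s ≤ 1) (hα : 0 ≤ α)
    (hρ : 0 ≤ ρ) (hq : 0 < q) (hq' : 0 < q') (hd : 0 < d) (h_le : q' ≤ 2 * (q * d)) :
    α * q ^ (-(2 * s)) * (d ^ (-(2 * s)) * (ρ / 4)) ≤ α * ρ * q' ^ (-(2 * s)) := by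
  have h_two : (2 : ℝ) ^ (2 * s) ≤ 4 := by
    refine (Real.rpow_le_rpow_of_exponent_le one_le_two (by linarith : 2 * s ≤ 2)).trans ?_
    norm_num
  have h_rpow : q ^ (-(2 * s)) * d ^ (-(2 * s)) ≤ 4 * q' ^ (-(2 * s)) := by
    rw [← Real.mul_rpow hq.le hd.le]
    refine (rpow_neg_le_rpow_mul_rpow_neg (mul_pos hq hd) hq' two_pos (by linarith) h_le).trans ?_
    gcongr
  calc α * q ^ (-(2 * s)) * (d ^ (-(2 * s)) * (ρ / 4))
      = α * (ρ / 4) * (q ^ (-(2 * s)) * d ^ (-(2 * s))) := by ring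
    _ ≤ α * (ρ / 4) * (4 * q' ^ (-(2 * s))) := by gcongr
    _ = _ := by ring

namespace BlockScheme

variable {K : ℕ} {S : BlockScheme K} {s C ρ : ℝ} {α : ℕ → ℝ} {ω : ℕ → Block K} {i : ℕ}

theorem mul_law_le_of_big (hs : 1 / 2 ≤ s) (hs1 : s ≤ 1) (hω : ω ∈ S.typical) (hi : S.big i)
    (hα : 0 ≤ α i) (hα_height : α i ≤ (S.height i : ℝ) ^ (-(3 * s - 1)))
    (hα_succ : (8 * 2 ^ K) ^ 2 ≤ α (i + 1)) :
    ENNReal.ofReal (α i * (blockDen ω i : ℝ) ^ (-(2 * s))) * S.law i (ω i) ≤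
      ENNReal.ofReal (α (i + 1) * (blockDen ω (i + 1) : ℝ) ^ (-(2 * s))) := by
  have hq := one_le_blockDen ω i
  have hq' := one_le_blockDen ω (i + 1)
  have h_height : (1 : ℝ) ≤ S.height i := by exact_mod_cast (S.height i).pos
  have h_den : (blockDen ω (i + 1) : ℝ) ≤ 8 * 2 ^ K * (S.height i : ℝ) ^ 2 * blockDen ω i := by
    obtain ⟨u, v, hu, hv, h_eq⟩ := exists_eq_bigBlock (mem_support_bigLaw hω hi)
    have h_succ : (blockDen ω (i + 1) : ℝ) ≤
        2 * (blockDen ω i * convDen (List.ofFn (ω i))) := by exact_mod_cast blockDen_succ_le ω i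
    rw [h_eq] at h_succ
    nlinarith [convDen_bigBlock_le (K := K) hu.2 hv.2]
  rw [S.law_of_big hi]
  refine (mul_le_mul_right (bigLaw_apply_le _ _) _).trans ?_
  rw [← ENNReal.ofReal_mul (by positivity)]
  refine ENNReal.ofReal_le_ofReal ((mul_rpow_mul_inv_sq_le hs hs1 ?_ h_height (by linarith)
    (by linarith) hα_height h_den).trans (by gcongr))
  linarith [one_le_pow₀ (one_le_two (α := ℝ)) (n := K)]

theorem mul_law_le_of_not_big (hs : 0 ≤ s) (hs1 : s ≤ 1) (hρ : 0 ≤ ρ) (hi : ¬ S.big i)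
    (h_law : ∀ w, S.normalLaw w ≤
      ENNReal.ofReal ((convDen (List.ofFn w) : ℝ) ^ (-(2 * s)) * (ρ / 4)))
    (hα : 0 ≤ α i) (hα_succ : α i * ρ ≤ α (i + 1)) :
    ENNReal.ofReal (α i * (blockDen ω i : ℝ) ^ (-(2 * s))) * S.law i (ω i) ≤
      ENNReal.ofReal (α (i + 1) * (blockDen ω (i + 1) : ℝ) ^ (-(2 * s))) := by
  have hq := one_le_blockDen ω i
  have hq' := one_le_blockDen ω (i + 1)
  have hd := one_le_convDen (List.ofFn (ω i))
  have h_den : (blockDen ω (i + 1) : ℝ) ≤ 2 * (blockDen ω i * convDen (List.ofFn (ω i))) := by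
    exact_mod_cast blockDen_succ_le ω i
  rw [S.law_of_not_big hi]
  refine (mul_le_mul_right (h_law _) _).trans ?_
  rw [← ENNReal.ofReal_mul (by positivity)]
  exact ENNReal.ofReal_le_ofReal ((mul_rpow_mul_rpow_le hs hs1 hα hρ (by linarith) (by linarith)
    (by linarith) h_den).trans (by gcongr))

theorem isMassBound_of_recursion (hs : 1 / 2 ≤ s) (hs1 : s ≤ 1) (hρ : 0 ≤ ρ)
    (h_law : ∀ w, S.normalLaw w ≤
      ENNReal.ofReal ((convDen (List.ofFn w) : ℝ) ^ (-(2 * s)) * (ρ / 4)))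
    (hα : ∀ i, 0 ≤ α i) (hαC : ∀ i, α i ≤ C) (hα_zero : 1 ≤ α 0)
    (hα_height : ∀ i, S.big i → α i ≤ (S.height i : ℝ) ^ (-(3 * s - 1)))
    (hα_big : ∀ i, S.big i → (8 * 2 ^ K) ^ 2 ≤ α (i + 1))
    (hα_normal : ∀ i, ¬ S.big i → α i * ρ ≤ α (i + 1)) : S.IsMassBound s C α where
  nonneg := hα
  le := hαC
  le_height := hα_height
  prod_le ω hω m := by
    induction m with
    | zero => simpa [blockDen, digitPrefix] using hα_zero
    | succ m ih =>
      rw [Finset.prod_range_succ]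
      refine (mul_le_mul_left ih _).trans ?_
      by_cases hm : S.big m
      · exact mul_law_le_of_big hs hs1 hω hm (hα m) (hα_height m hm) (hα_big m hm)
      · exact mul_law_le_of_not_big (by linarith) hs1 hρ hm h_law (hα m) (hα_normal m hm)

end BlockScheme

theorem exists_pmf_le_div {α : Type*} {f : α → ENNReal} (hf : ∀ a, f a ≠ ⊤) {c : ENNReal}
    (hc : c < ∑' a, f a) : ∃ p : PMF α, p.support.Finite ∧ ∀ a, p a ≤ f a / c := by
  classical
  rw [ENNReal.tsum_eq_iSup_sum, lt_iSup_iff] at hc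
  obtain ⟨A, hA⟩ := hc
  have h_sum : ∑ a ∈ A, f a ≠ ⊤ := ENNReal.sum_ne_top.2 fun a _ => hf a
  refine ⟨PMF.ofFinset (fun a => if a ∈ A then f a / ∑ a ∈ A, f a else 0) A ?_
    fun a ha => if_neg ha, A.finite_toSet.subset fun a ha => ?_, fun a => ?_⟩
  · rw [Finset.sum_congr rfl fun a ha => if_pos ha]
    simp_rw [div_eq_mul_inv]
    rw [← Finset.sum_mul, ENNReal.mul_inv_cancel hA.ne_bot h_sum]
  · exact of_not_not fun h_not => (PMF.mem_support_iff _ _).1 ha (if_neg h_not)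
  · rw [PMF.ofFinset_apply]
    split_ifs
    · exact ENNReal.div_le_div_left hA.le _
    · exact zero_le

theorem exists_normalLaw {k : ℕ} {s Y : ℝ} (hY : 0 < Y) (h : ENNReal.ofReal (8 * Y) < denSum k s) :
    ∃ (p : PMF (Fin k → ℕ+)) (M : ℕ+), (∀ w ∈ p.support, ∀ j, w j ≤ M) ∧
      ∀ w, p w ≤ ENNReal.ofReal ((convDen (List.ofFn w) : ℝ) ^ (-(2 * s)) * ((2 * Y)⁻¹ / 4)) := by
  obtain ⟨p, hp_fin, hp⟩ := exists_pmf_le_div (fun _ => ENNReal.ofReal_ne_top) h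
  obtain ⟨M, hM⟩ := hp_fin.bddAbove
  refine ⟨p, Finset.univ.sup M, fun w hw j => (hM hw j).trans (Finset.le_sup (Finset.mem_univ j)),
    fun w => (hp w).trans_eq ?_⟩
  rw [← ENNReal.ofReal_div_of_pos (by positivity)]
  congr 1
  field_simp
  ring

/-! ### The lower bound -/

theorem frequently_exists_mem_block {P : ℕ → Prop} (hP : ∃ᶠ n in atTop, P n) {N : ℕ} (hN : 0 < N) :
    ∃ᶠ i in atTop, ∃ n, N * (i + 1) ≤ n ∧ n ≤ N * (i + 2) ∧ P n := by
  refine frequently_atTop.2 fun i₀ => ?_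
  obtain ⟨n, hn, hPn⟩ := frequently_atTop.1 hP (N * (i₀ + 1))
  have h_div : i₀ + 1 ≤ n / N := by rwa [Nat.le_div_iff_mul_le hN, mul_comm]
  obtain ⟨i, hi⟩ := Nat.exists_eq_add_of_le' (show 1 ≤ n / N by omega)
  refine ⟨i, by omega, n, hi ▸ Nat.mul_div_le n N, ?_, hPn⟩
  have := (Nat.lt_mul_div_succ n hN).le
  rwa [hi] at this

/-- The size of the large digits of the `i`-th block of `N` digits, for digits of size `b ^ n` at
depth `n`. -/
noncomputable def blockHeight (b : ℝ) (N i : ℕ) : ℕ+ := Nat.succPNat ⌈b ^ (N * (i + 2))⌉₊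

section BlockHeight

variable {b : ℝ} (N i : ℕ)

theorem pow_le_blockHeight : b ^ (N * (i + 2)) ≤ blockHeight b N i := by
  rw [blockHeight, Nat.succPNat_coe, Nat.cast_succ]
  linarith [Nat.le_ceil (b ^ (N * (i + 2)))]

theorem blockHeight_le (hb : 1 ≤ b) : (blockHeight b N i : ℝ) ≤ 3 * b ^ (N * (i + 2)) := by
  have h_pow : 1 ≤ b ^ (N * (i + 2)) := one_le_pow₀ hb
  rw [blockHeight, Nat.succPNat_coe, Nat.cast_succ]
  linarith [Nat.ceil_lt_add_one (zero_le_one.trans h_pow)]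

theorem two_le_blockHeight (hb : 0 < b) : 2 ≤ blockHeight b N i := by
  have h_ceil : 0 < ⌈b ^ (N * (i + 2))⌉₊ := Nat.ceil_pos.2 (by positivity)
  exact PNat.coe_le_coe _ _ |>.1 (Nat.succ_le_succ h_ceil)

theorem eventually_mul_pow_le_blockHeight_rpow (hb : 1 ≤ b) {r : ℝ} (hr : 0 ≤ r) (c : ℝ) :
    ∀ᶠ i : ℕ in atTop,
      c * (2 * (b ^ N) ^ r)⁻¹ ^ i ≤ (blockHeight b N i : ℝ) ^ (-r) := by
  set Y := (b ^ N) ^ r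
  have hb0 : 0 < b := by linarith
  have h_height (i : ℕ) : 3 ^ (-r) * Y⁻¹ ^ 2 * Y⁻¹ ^ i ≤ (blockHeight b N i : ℝ) ^ (-r) := by
    refine le_trans (le_of_eq ?_) (Real.rpow_le_rpow_of_nonpos (Nat.cast_pos.2 (PNat.pos _))
      (blockHeight_le N i hb) (by linarith))
    rw [Real.mul_rpow (by positivity) (by positivity), mul_assoc, ← pow_add, add_comm 2 i,
      pow_mul, ← Real.rpow_pow_comm (by positivity), Real.rpow_neg (by positivity) r,
      Real.rpow_neg (by positivity) r]
  have h_lim : Tendsto (fun i : ℕ => c * (1 / 2 : ℝ) ^ i) atTop (nhds 0) := by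
    simpa using (tendsto_pow_atTop_nhds_zero_of_lt_one (by norm_num)
      (by norm_num : (1 / 2 : ℝ) < 1)).const_mul c
  filter_upwards [h_lim.eventually_le_const (by positivity : 0 < (3 : ℝ) ^ (-r) * Y⁻¹ ^ 2)]
    with i hi
  calc c * (2 * Y)⁻¹ ^ i = c * (1 / 2) ^ i * Y⁻¹ ^ i := by
        rw [mul_inv, mul_pow, one_div, mul_assoc]
    _ ≤ 3 ^ (-r) * Y⁻¹ ^ 2 * Y⁻¹ ^ i := by gcongr
    _ ≤ _ := h_height i

end BlockHeight

theorem exists_blockScheme {K : ℕ} {b s : ℝ} (hb : 1 ≤ b) (hs : 1 / 2 ≤ s) (hs1 : s ≤ 1)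
    (h : ENNReal.ofReal (8 * (b ^ (K + 2)) ^ (3 * s - 1)) < denSum (K + 2) s)
    {good : ℕ → Prop} (hgood : ∃ᶠ i in atTop, good i) :
    ∃ (S : BlockScheme K) (C : ℝ) (α : ℕ → ℝ), S.IsMassBound s C α ∧
      (∀ i, b ^ ((K + 2) * (i + 2)) ≤ S.height i) ∧ ∃ᶠ i in atTop, S.big i ∧ good i := by
  set Y := (b ^ (K + 2)) ^ (3 * s - 1)
  have hY : 1 ≤ Y := Real.one_le_rpow (one_le_pow₀ hb) (by linarith)
  have hρ : 0 < (2 * Y)⁻¹ := by positivity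
  have hρ1 : (2 * Y)⁻¹ ≤ 1 := inv_le_one_of_one_le₀ (by linarith)
  have hC : (1 : ℝ) ≤ (8 * 2 ^ K) ^ 2 :=
    one_le_pow₀ (by linarith [one_le_pow₀ (one_le_two (α := ℝ)) (n := K)])
  obtain ⟨p, M, hM, hp⟩ := exists_normalLaw (by linarith) h
  let t (i : ℕ) : ℝ := (blockHeight b (K + 2) i : ℝ) ^ (-(3 * s - 1))
  let α : ℕ → ℝ := greedyWeight good t ((8 * 2 ^ K) ^ 2) (2 * Y)⁻¹
  let S : BlockScheme K :=
    { big := fun i => good i ∧ α i ≤ t i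
      height := blockHeight b (K + 2)
      normalLaw := p
      digitBound := M
      two_le_height := fun i => two_le_blockHeight _ i (by linarith)
      le_digitBound := hM }
  refine ⟨S, (8 * 2 ^ K) ^ 2, α, ?_, pow_le_blockHeight (K + 2), ?_⟩
  · exact BlockScheme.isMassBound_of_recursion hs hs1 hρ.le hp
      (fun i => (greedyWeight_pos (by linarith) hρ i).le) (greedyWeight_le hC hρ hρ1) le_rfl
      (fun i hi => hi.2) (fun i hi => (greedyWeight_succ_of_le hi).ge)
      (fun i hi => (greedyWeight_succ_of_not_le hi).ge)
  · exact (frequently_greedyWeight_le hρ hgood (eventually_mul_pow_le_blockHeight_rpow (K + 2) hb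
      (by linarith))).mono fun i hi => ⟨hi, hi.1⟩

theorem BlockScheme.blockPoint_mem_twoLargeDigitSet {K : ℕ} {S : BlockScheme K} {ψ : ℕ → ℝ}
    (h : ∃ᶠ i in atTop, S.big i ∧ ∃ n, (K + 2) * (i + 1) ≤ n ∧ ψ n ≤ S.height i)
    {ω : ℕ → Block K} (hω : ω ∈ S.typical) : blockPoint ω ∈ twoLargeDigitSet ψ := by
  refine ⟨contFrac_mem_Ioo _, irrational_contFrac _, infinite_of_forall_exists_gt fun n₀ => ?_⟩
  obtain ⟨i, hi, h_big, n, hn, hψ⟩ := frequently_atTop.1 h n₀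
  obtain ⟨u, v, hu, hv, h_eq⟩ := exists_eq_bigBlock (mem_support_bigLaw hω h_big)
  have h_first : pq (blockPoint ω) ((K + 2) * i + 1) = u :=
    (pq_contFrac _ _).trans (congrArg _ ((blockDigits_mul_add ω i 0).trans (congrFun h_eq 0)))
  have h_second : pq (blockPoint ω) ((K + 2) * i + 2) = v :=
    (pq_contFrac _ _).trans (congrArg _ ((blockDigits_mul_add ω i 1).trans (congrFun h_eq 1)))
  rw [mul_add] at hn
  refine ⟨n, ⟨(K + 2) * i + 1, (K + 2) * i + 2, by omega, by omega, by omega, by omega, by omega,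
    ?_, ?_⟩, ?_⟩
  · rw [h_first]
    exact hψ.trans (by exact_mod_cast hu.1)
  · rw [h_second]
    exact hψ.trans (by exact_mod_cast hv.1)
  · nlinarith

theorem ofReal_le_dimH_twoLargeDigitSet {B : ℝ} (hB : 1 ≤ B) {ψ : ℕ → ℝ}
    (hψ : ∀ b, B < b → ∃ᶠ n in atTop, ψ n ≤ b ^ n) {s : ℝ} (hs : 1 / 2 ≤ s) (hs1 : s ≤ 1)
    (h : (((3 * s - 1) * Real.log B : ℝ) : EReal) < denGrowth s) :
    ENNReal.ofReal s ≤ dimH (twoLargeDigitSet ψ) := by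
  obtain ⟨b, hb, h_freq⟩ :=
    exists_frequently_mul_rpow_lt_denSum (by linarith) (by linarith : 0 < 3 * s - 1) h
  obtain ⟨N, hN, hN2⟩ := ((h_freq 8).and_eventually (eventually_ge_atTop 2)).exists
  obtain ⟨K, rfl⟩ := Nat.exists_eq_add_of_le' hN2
  have hb1 : 1 ≤ b := by linarith
  obtain ⟨S, C, α, h_mass, h_height, h_big⟩ :=
    exists_blockScheme hb1 hs hs1 hN (frequently_exists_mem_block (hψ b hb) (K + 1).succ_pos)
  refine ofReal_le_dimH_of_blockScheme h_mass hs hs1 fun ω hω =>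
    BlockScheme.blockPoint_mem_twoLargeDigitSet (h_big.mono ?_) hω
  rintro i ⟨hi, n, hn, hn', hψn⟩
  exact ⟨hi, n, hn, hψn.trans ((pow_le_pow_right₀ hb1 hn').trans (h_height i))⟩

/-! ### The dimension -/

section Liminf

variable {ψ : ℕ → ℝ} {B b : ℝ}

theorem eventually_pow_le_of_liminf (hψ : ∀ n, 0 < ψ n) (hB : 1 < B)
    (hlim : atTop.liminf (fun n : ℕ => Real.log (ψ n) / n) = Real.log B) (hb : 0 < b)
    (hbB : b < B) : ∀ᶠ n in atTop, b ^ n ≤ ψ n := by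
  -- A real `liminf` of an unbounded sequence is `0`, whereas `log B > 0`.
  have h_bdd := of_not_not fun h =>
    (Real.log_pos hB).ne' (hlim.symm.trans (Real.liminf_of_not_isBoundedUnder h))
  filter_upwards [eventually_lt_of_lt_liminf (hlim ▸ Real.log_lt_log hb hbB) h_bdd,
    eventually_gt_atTop 0] with n hn hn0
  rw [lt_div_iff₀ (by exact_mod_cast hn0), mul_comm, ← Real.log_pow] at hn
  exact ((Real.log_lt_log_iff (by positivity) (hψ n)).1 hn).le

theorem frequently_le_pow_of_liminf (hψ : ∀ n, 0 < ψ n) (hB : 1 < B)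
    (hlim : atTop.liminf (fun n : ℕ => Real.log (ψ n) / n) = Real.log B) (hbB : B < b) :
    ∃ᶠ n in atTop, ψ n ≤ b ^ n := by
  have hB0 : 0 < B := zero_lt_one.trans hB
  have h_cobdd := of_not_not fun h =>
    (Real.log_pos hB).ne' (hlim.symm.trans (Real.liminf_of_not_isCoboundedUnder h))
  refine ((frequently_lt_of_liminf_lt h_cobdd (hlim ▸ Real.log_lt_log hB0 hbB)).and_eventually
    (eventually_gt_atTop 0)).mono fun n ⟨hn, hn0⟩ => ?_
  rw [div_lt_iff₀ (by exact_mod_cast hn0), mul_comm, ← Real.log_pow] at hn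
  exact ((Real.log_lt_log_iff (hψ n) (pow_pos (hB0.trans hbB) n)).1 hn).le

end Liminf

section Dimension

variable {ψ : ℕ → ℝ} {B : ℝ}

theorem bddBelow_subcriticalExponents : BddBelow (subcriticalExponents B) := ⟨0, fun _ hs => hs.1⟩

theorem lt_denGrowth_of_le_half_or_lt {s : ℝ} (hs0 : 0 ≤ s)
    (hs : s ≤ 1 / 2 ∨ s < sInf (subcriticalExponents B)) :
    (((3 * s - 1) * Real.log B : ℝ) : EReal) < denGrowth s := by
  rcases hs with hs | hs
  · rw [denGrowth_eq_top hs]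
    exact EReal.coe_lt_top _
  · exact not_le.1 fun h => notMem_of_lt_csInf hs bddBelow_subcriticalExponents ⟨hs0, h⟩

theorem dimH_twoLargeDigitSet_le (hB : 1 < B)
    (hψ : ∀ b, 1 < b → b < B → ∀ᶠ n in atTop, b ^ n ≤ ψ n) :
    dimH (twoLargeDigitSet ψ) ≤ ENNReal.ofReal (sInf (subcriticalExponents B)) := by
  refine dimH_le fun d hd => ?_
  by_contra! h_lt
  obtain ⟨s', hs', hs'd⟩ := exists_lt_of_csInf_lt ⟨1, one_mem_subcriticalExponents hB.le⟩
    ((ENNReal.ofReal_lt_coe_iff (Real.sInf_nonneg fun _ hs => hs.1)).1 h_lt)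
  rw [hausdorffMeasure_twoLargeDigitSet_eq_zero hB hψ hs' hs'd] at hd
  exact ENNReal.zero_ne_top hd

theorem le_dimH_twoLargeDigitSet (hB : 1 ≤ B)
    (hψ : ∀ b, B < b → ∃ᶠ n in atTop, ψ n ≤ b ^ n) :
    ENNReal.ofReal (sInf (subcriticalExponents B)) ≤ dimH (twoLargeDigitSet ψ) := by
  by_contra! h
  obtain ⟨d, hd, hd'⟩ := ENNReal.lt_iff_exists_nnreal_btwn.1 h
  rw [ENNReal.lt_ofReal_iff_toReal_lt ENNReal.coe_ne_top, ENNReal.coe_toReal] at hd'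
  have hs1 : sInf (subcriticalExponents B) ≤ 1 :=
    csInf_le bddBelow_subcriticalExponents (one_mem_subcriticalExponents hB)
  have h_le : ENNReal.ofReal (max (1 / 2) d) ≤ dimH (twoLargeDigitSet ψ) := by
    refine ofReal_le_dimH_twoLargeDigitSet hB hψ (le_max_left _ _)
      (max_le (by norm_num) (hd'.le.trans hs1))
      (lt_denGrowth_of_le_half_or_lt (le_max_of_le_right d.2) ?_)
    rcases max_cases (1 / 2 : ℝ) d with ⟨h_eq, -⟩ | ⟨h_eq, -⟩
    · exact Or.inl h_eq.le
    · exact Or.inr (h_eq.trans_lt hd')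
  refine (hd.trans_le (le_trans ?_ h_le)).false
  rw [← ENNReal.ofReal_coe_nnreal]
  exact ENNReal.ofReal_le_ofReal (le_max_right _ _)

end Dimension

theorem tan_tian_wang_finite_general (ψ : ℕ → ℝ) (hψpos : ∀ n, 0 < ψ n) (B : ℝ) (hB : 1 < B)
    (hlim : Filter.atTop.liminf (fun n : ℕ => Real.log (ψ n) / n) = Real.log B) :
    dimH {x : ℝ | x ∈ Set.Ioo (0 : ℝ) 1 ∧ Irrational x ∧
      {n : ℕ | ∃ k l : ℕ, 1 ≤ k ∧ k ≤ n ∧ 1 ≤ l ∧ l ≤ n ∧ k ≠ l ∧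
        ψ n ≤ (pq x k : ℝ) ∧ ψ n ≤ (pq x l : ℝ)}.Infinite} =
    ENNReal.ofReal (sInf {s : ℝ | 0 ≤ s ∧
      Filter.atTop.limsup (fun n : ℕ =>
        (((n : ℝ)⁻¹ : ℝ) : EReal) * ENNReal.log (∑' a : Fin n → ℕ+,
          ENNReal.ofReal (B ^ (-(n : ℝ) * (3 * s - 1)) *
            ((contQ n fun i => (a i : ℕ)) : ℝ) ^ (-(2 * s))))) ≤ 0}) := by
  rw [← subcriticalExponents_eq (zero_lt_one.trans hB)]
  have h_lower := fun b (hb : 1 < b) =>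
    eventually_pow_le_of_liminf hψpos hB hlim (zero_lt_one.trans hb)
  have h_upper := fun b => frequently_le_pow_of_liminf (b := b) hψpos hB hlim
  exact (dimH_twoLargeDigitSet_le hB h_lower).antisymm (le_dimH_twoLargeDigitSet hB.le h_upper)

theorem tan_tian_wang_finite (ψ : ℕ → ℝ) (hψpos : ∀ n, 0 < ψ n) (hψmono : Monotone ψ)
    (B : ℝ) (hB : 1 < B)
    (hlim : Filter.atTop.liminf (fun n : ℕ => Real.log (ψ n) / n) = Real.log B) :
    dimH {x : ℝ | x ∈ Set.Ioo (0 : ℝ) 1 ∧ Irrational x ∧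
      {n : ℕ | ∃ k l : ℕ, 1 ≤ k ∧ k ≤ n ∧ 1 ≤ l ∧ l ≤ n ∧ k ≠ l ∧
        ψ n ≤ (pq x k : ℝ) ∧ ψ n ≤ (pq x l : ℝ)}.Infinite} =
    ENNReal.ofReal (sInf {s : ℝ | 0 ≤ s ∧
      Filter.atTop.limsup (fun n : ℕ =>
        (((n : ℝ)⁻¹ : ℝ) : EReal) * ENNReal.log (∑' a : Fin n → ℕ+,
          ENNReal.ofReal (B ^ (-(n : ℝ) * (3 * s - 1)) *
            ((contQ n fun i => (a i : ℕ)) : ℝ) ^ (-(2 * s))))) ≤ 0}) :=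
  tan_tian_wang_finite_general ψ hψpos B hB hlim
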